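/- Let g be a smooth Riemannian metric on an open set Ω ⊆ ℝ² containing a point p. Then there exist an open neighborhood U of p with U ⊆ Ω and an injective smooth map u : U → ℝ⁴ with (∇u(x))ᵀ ∇u(x) = g(x) for all x ∈ U; that is, every smooth 2-dimensional metric admits a smooth local isometric embedding in ℝ⁴. (Poznyak, 1973.) -/

import Mathlib

noncomputable section
open Matrix Set

attribute [local instance] Matrix.normedAddCommGroup Matrix.normedSpace

abbrev E2 := EuclideanSpace ℝ (Fin 2)

/-- The Jacobian matrix (4×2) of a map `u : ℝ² → ℝ⁴` at a point `x`. -/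
def Jac (u : E2 → EuclideanSpace ℝ (Fin 4)) (x : E2) : Matrix (Fin 4) (Fin 2) ℝ :=
  Matrix.of fun i j => fderiv ℝ u x (EuclideanSpace.single j 1) i

open Filter Topology MeasureTheory
open scoped ContDiff unitInterval

/-! ### Smooth superposition operators on spaces of continuous functions -/

/-- Pointwise application of operator-valued functions, as a continuous bilinear map. -/
def applyCLM (K E F : Type) [TopologicalSpace K] [CompactSpace K] [NormedAddCommGroup E]
    [NormedSpace ℝ E] [NormedAddCommGroup F] [NormedSpace ℝ F] :
    C(K, E →L[ℝ] F) →L[ℝ] C(K, E) →L[ℝ] C(K, F) :=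
  LinearMap.mkContinuous₂
    (LinearMap.mk₂ ℝ (fun (A : C(K, E →L[ℝ] F)) (h : C(K, E)) => (⟨fun x => A x (h x), by fun_prop⟩ : C(K, F)))
      (fun A B h => by ext x; simp) (fun c A h => by ext x; simp)
      (fun A h k => by ext x; simp) (fun c A h => by ext x; simp)) 1 (by
    intro A h
    rw [ContinuousMap.norm_le _ (by positivity)]
    intro x
    rw [one_mul]
    exact ((A x).le_opNorm (h x)).trans
      (mul_le_mul (A.norm_coe_le_norm x) (h.norm_coe_le_norm x) (norm_nonneg _)
        ((norm_nonneg _).trans (A.norm_coe_le_norm x))))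

theorem hasFDerivAt_superposition {K E F : Type} [TopologicalSpace K] [CompactSpace K]
    [NormedAddCommGroup E] [NormedSpace ℝ E] [NormedAddCommGroup F] [NormedSpace ℝ F]
    (f : C(E, F)) (f' : C(E, E →L[ℝ] F)) (hf : ∀ x, HasFDerivAt f (f' x) x) (W : C(K, E)) :
    HasFDerivAt (fun W : C(K, E) => f.comp W) (applyCLM K E F (f'.comp W)) W := by
  rw [hasFDerivAt_iff_isLittleO_nhds_zero, Asymptotics.isLittleO_iff]
  intro ε hε
  have hc : ContinuousAt (fun W : C(K, E) => f'.comp W) W :=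
    (ContinuousMap.continuous_postcomp (X := K) f').continuousAt
  obtain ⟨δ, hδ, hW⟩ := (Metric.continuousAt_iff (f := fun W : C(K, E) => f'.comp W)).1 hc ε hε
  filter_upwards [Metric.ball_mem_nhds (0 : C(K, E)) hδ] with h hh
  rw [mem_ball_zero_iff] at hh
  rw [ContinuousMap.norm_le _ (by positivity)]
  intro x
  have key := (convex_ball (W x) δ).norm_image_sub_le_of_norm_hasFDerivWithin_le'
    (f := f) (f' := f') (φ := f' (W x)) (C := ε) (x := W x) (y := W x + h x)
    (fun y _ => (hf y).hasFDerivWithinAt) (fun y hy => by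
      have h1 : dist (W + ContinuousMap.const K (y - W x)) W < δ := by
        rw [dist_eq_norm, add_sub_cancel_left]
        refine lt_of_le_of_lt ((ContinuousMap.norm_le _ (norm_nonneg (y - W x))).2 fun _ => ?_)
          (mem_ball_iff_norm.1 hy)
        simp
      have h2 := hW h1
      have h3 := (ContinuousMap.dist_apply_le_dist x).trans h2.le
      simpa [dist_eq_norm] using h3) (Metric.mem_ball_self hδ) (by
      rw [mem_ball_iff_norm, add_sub_cancel_left]
      exact (h.norm_coe_le_norm x).trans_lt hh)
  rw [add_sub_cancel_left] at key
  exact key.trans (mul_le_mul_of_nonneg_left (h.norm_coe_le_norm x) hε.le)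

theorem contDiff_superposition {K E F : Type} [TopologicalSpace K] [CompactSpace K]
    [NormedAddCommGroup E] [NormedSpace ℝ E] [NormedAddCommGroup F] [NormedSpace ℝ F]
    (f : C(E, F)) (hf : ContDiff ℝ ∞ f) :
    ContDiff ℝ ∞ (fun W : C(K, E) => f.comp W) := by
  rw [contDiff_infty]
  intro n
  induction n generalizing F with
  | zero => exact contDiff_zero.2 (ContinuousMap.continuous_postcomp f)
  | succ n ih =>
    have hd : ContDiff ℝ ∞ (fderiv ℝ f) := hf.fderiv_right (by simp)
    refine contDiff_succ_iff_hasFDerivAt.2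
      ⟨fun W => applyCLM K E F ((⟨fderiv ℝ f, hd.continuous⟩ : C(E, E →L[ℝ] F)).comp W),
        ContDiff.comp (by apply ContinuousLinearMap.contDiff)
          (ih (F := E →L[ℝ] F) ⟨fderiv ℝ f, hd.continuous⟩ hd), fun W => ?_⟩
    exact hasFDerivAt_superposition f ⟨fderiv ℝ f, hd.continuous⟩
      (fun x => (hf.differentiable (by simp) x).hasFDerivAt) W

/-! ### Local inverses and smooth extension of germs -/

theorem exists_smooth_localInverse {E F : Type} [NormedAddCommGroup E] [NormedSpace ℝ E]
    [CompleteSpace E] [NormedAddCommGroup F] [NormedSpace ℝ F] {f : E → F} (hf : ContDiff ℝ ∞ f)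
    {a : E} {f' : E ≃L[ℝ] F} (hf' : HasFDerivAt f (f' : E →L[ℝ] F) a) :
    ∃ φ : F → E, φ (f a) = a ∧ (∀ᶠ y in 𝓝 (f a), ContDiffAt ℝ ∞ φ y ∧ f (φ y) = y) ∧
      ∀ᶠ x in 𝓝 a, φ (f x) = x := by
  have hat : ContDiffAt ℝ ∞ f a := hf.contDiffAt
  let e := hat.toOpenPartialHomeomorph f hf' (by simp)
  have he : ∀ x, e x = f x := fun x => rfl
  have ha : a ∈ e.source := hat.mem_toOpenPartialHomeomorph_source hf' (by simp)
  have hfa : f a ∈ e.target := e.map_source ha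
  have hsymm : e.symm (f a) = a := e.left_inv ha
  refine ⟨e.symm, hsymm, ?_, e.eventually_left_inverse ha⟩
  have hopen : ∀ᶠ x in 𝓝 a, fderiv ℝ f x ∈ range ((↑) : (E ≃L[ℝ] F) → E →L[ℝ] F) := by
    have hc : Continuous (fderiv ℝ f) := hf.continuous_fderiv (by simp)
    refine hc.continuousAt.eventually (ContinuousLinearEquiv.isOpen.mem_nhds ?_)
    rw [hf'.fderiv]
    exact mem_range_self f'
  have hcont : Tendsto e.symm (𝓝 (f a)) (𝓝 a) := by
    have := e.symm.continuousAt hfa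
    rwa [ContinuousAt, hsymm] at this
  filter_upwards [e.open_target.mem_nhds hfa, hcont.eventually hopen] with y hy hy'
  obtain ⟨g', hg'⟩ := hy'
  refine ⟨e.contDiffAt_symm hy (f₀' := g') ?_ hf.contDiffAt, e.right_inv hy⟩
  rw [hg']
  exact (hf.differentiable (by simp) _).hasFDerivAt

theorem exists_contDiff_eventuallyEq {E F : Type} [NormedAddCommGroup E] [NormedSpace ℝ E]
    [FiniteDimensional ℝ E] [NormedAddCommGroup F] [NormedSpace ℝ F] {f : E → F} {x : E}
    (hf : ∀ᶠ y in 𝓝 x, ContDiffAt ℝ ∞ f y) :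
    ∃ φ : E → F, ContDiff ℝ ∞ φ ∧ φ =ᶠ[𝓝 x] f := by
  obtain ⟨r, hr, hball⟩ := Metric.eventually_nhds_iff_ball.1 hf
  let χ : ContDiffBump x := ⟨r / 3, r / 2, by positivity, by linarith⟩
  refine ⟨fun y => χ y • f y, contDiff_iff_contDiffAt.2 fun y => ?_, ?_⟩
  · by_cases hy : y ∈ Metric.ball x r
    · exact χ.contDiff.contDiffAt.smul (hball y hy)
    · have h0 : (fun y => χ y • f y) =ᶠ[𝓝 y] fun _ => 0 := by
        have hy' : y ∉ tsupport χ := by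
          rw [χ.tsupport_eq, Metric.mem_closedBall]
          rw [Metric.mem_ball] at hy
          change ¬ dist y x ≤ r / 2
          linarith
        filter_upwards [notMem_tsupport_iff_eventuallyEq.1 hy'] with z hz
        simp [hz]
      exact contDiffAt_const.congr_of_eventuallyEq h0
  · filter_upwards [χ.eventuallyEq_one] with y hy
    simp [hy]

/-! ### Semilinear hyperbolic systems in two characteristic variables -/

theorem exists_smooth_fixedPoint {P Y : Type} [NormedAddCommGroup P] [NormedSpace ℝ P]
    [CompleteSpace P] [NormedAddCommGroup Y] [NormedSpace ℝ Y] [CompleteSpace Y] {R : P × Y → Y}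
    (hR : ContDiff ℝ ∞ R) {y₀ : Y} (h0 : ∀ y, R (0, y) = y₀) :
    ∃ φ : P → Y, φ 0 = y₀ ∧ (∀ᶠ z in 𝓝 0, ContDiffAt ℝ ∞ φ z ∧ φ z = R (z, φ z)) ∧
      ∀ᶠ w in 𝓝 ((0 : P), y₀), w.2 = R w → w.2 = φ w.1 := by
  let Ψ : P × Y → P × Y := fun w => (w.1, w.2 - R w)
  have hΨ : ContDiff ℝ ∞ Ψ := contDiff_fst.prodMk (contDiff_snd.sub hR)
  let R' := fderiv ℝ R (0, y₀)
  have hR' : HasFDerivAt R R' (0, y₀) := (hR.differentiable (by simp) _).hasFDerivAt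
  have hvert : ∀ y, R' (0, y) = 0 := by
    have h1 : HasFDerivAt (fun y => R (0, y)) (R' ∘L ContinuousLinearMap.inr ℝ P Y) y₀ :=
      HasFDerivAt.comp y₀ hR' (hasFDerivAt_prodMk_right 0 y₀)
    have h2 : HasFDerivAt (fun y => R (0, y)) (0 : Y →L[ℝ] Y) y₀ := by
      simp only [h0]
      exact hasFDerivAt_const _ _
    intro y
    simpa using DFunLike.congr_fun (h1.unique h2) y
  let Ψ' : (P × Y) ≃L[ℝ] P × Y := ContinuousLinearEquiv.skewProd
    (ContinuousLinearEquiv.refl ℝ P) (ContinuousLinearEquiv.refl ℝ Y)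
    (-(R' ∘L ContinuousLinearMap.inl ℝ P Y))
  have hΨ' : HasFDerivAt Ψ (Ψ' : (P × Y) →L[ℝ] P × Y) (0, y₀) := by
    have h1 : HasFDerivAt Ψ ((ContinuousLinearMap.fst ℝ P Y).prod
        (ContinuousLinearMap.snd ℝ P Y - R')) (0, y₀) :=
      hasFDerivAt_fst.prodMk (hasFDerivAt_snd.sub hR')
    convert h1 using 1
    ext w
    · simp [Ψ']
    · simp [Ψ']
    · simp [Ψ']
    · simp [Ψ', hvert]
  obtain ⟨θ, hθ0, hθ, hθ'⟩ := exists_smooth_localInverse hΨ hΨ'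
  have hΨ0 : Ψ (0, y₀) = (0, 0) := by simp [Ψ, h0]
  rw [hΨ0] at hθ0 hθ
  have hin : Continuous fun z : P => (z, (0 : Y)) := by fun_prop
  refine ⟨fun z => (θ (z, 0)).2, by simp [hθ0], ?_, ?_⟩
  · filter_upwards [hin.continuousAt.eventually hθ] with z hz
    obtain ⟨hz1, hz2⟩ := hz
    have h1 : (θ (z, 0)).1 = z := congrArg Prod.fst hz2
    have h2 : (θ (z, 0)).2 - R (θ (z, 0)) = 0 := congrArg Prod.snd hz2
    refine ⟨?_, ?_⟩
    · exact contDiff_snd.contDiffAt.comp z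
        (hz1.comp z (contDiff_id.prodMk contDiff_const).contDiffAt)
    · have h3 : θ (z, 0) = (z, (θ (z, 0)).2) := Prod.ext h1 rfl
      rw [← h3]
      exact sub_eq_zero.1 h2
  · filter_upwards [hθ'] with w hw hfix
    have h1 : Ψ w = (w.1, 0) := Prod.ext rfl (sub_eq_zero.2 hfix)
    rw [h1] at hw
    exact (congrArg Prod.snd hw).symm

/-- The primitive in the second variable of a function on the unit square. -/
def primitiveSnd (E : Type) [NormedAddCommGroup E] [NormedSpace ℝ E] :
    C(I × I, E) →L[ℝ] C(I × I, E) :=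
  LinearMap.mkContinuous
    { toFun := fun h => ⟨fun x => (x.2 : ℝ) • ∫ τ : I, h (x.1, x.2 * τ), by
        have h1 : Continuous (Function.uncurry fun (x : I × I) (τ : I) => h (x.1, x.2 * τ)) := by
          unfold Function.uncurry
          fun_prop
        have h2 := continuous_parametric_integral_of_continuous (μ := volume) h1 isCompact_univ
        simp only [Measure.restrict_univ] at h2
        fun_prop⟩
      map_add' := fun h k => by
        ext x
        have hi : ∀ h : C(I × I, E), Integrable (fun τ : I => h (x.1, x.2 * τ)) volume := fun h =>
          integrableOn_univ.1
            (ContinuousOn.integrableOn_compact isCompact_univ (by fun_prop))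
        simp only [ContinuousMap.coe_mk, ContinuousMap.add_apply]
        rw [integral_add (hi h) (hi k), smul_add]
      map_smul' := fun c h => by
        ext x
        simp only [ContinuousMap.coe_mk, ContinuousMap.smul_apply, RingHom.id_apply]
        rw [integral_smul, smul_comm] } 1 (by
    intro h
    rw [ContinuousMap.norm_le _ (by positivity)]
    intro x
    have h1 : ‖∫ τ : I, h (x.1, x.2 * τ)‖ ≤ ‖h‖ * (volume : Measure I).real univ :=
      norm_integral_le_of_norm_le_const (Eventually.of_forall fun τ => h.norm_coe_le_norm _)
    simp only [LinearMap.coe_mk, AddHom.coe_mk, ContinuousMap.coe_mk, norm_smul, Real.norm_eq_abs,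
      abs_of_nonneg x.2.2.1]
    simp only [probReal_univ, mul_one] at h1
    exact mul_le_mul x.2.2.2 h1 (norm_nonneg _) zero_le_one)

theorem primitiveSnd_apply {E : Type} [NormedAddCommGroup E] [NormedSpace ℝ E]
    (h : C(I × I, E)) (x : I × I) :
    primitiveSnd E h x = (x.2 : ℝ) • ∫ τ : I, h (x.1, x.2 * τ) := rfl

/-- Exchange of the variables of a function on the unit square. -/
def swapCLM (E : Type) [NormedAddCommGroup E] [NormedSpace ℝ E] :
    C(I × I, E) →L[ℝ] C(I × I, E) where
  toFun h := h.comp ⟨Prod.swap, continuous_swap⟩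
  map_add' _ _ := rfl
  map_smul' _ _ := rfl
  cont := ContinuousMap.continuous_precomp _

/-- The primitive in the first variable of a function on the unit square. -/
def primitiveFst (E : Type) [NormedAddCommGroup E] [NormedSpace ℝ E] :
    C(I × I, E) →L[ℝ] C(I × I, E) :=
  swapCLM E ∘L primitiveSnd E ∘L swapCLM E

theorem primitiveFst_apply {E : Type} [NormedAddCommGroup E] [NormedSpace ℝ E]
    (h : C(I × I, E)) (x : I × I) :
    primitiveFst E h x = (x.1 : ℝ) • ∫ τ : I, h (x.1 * τ, x.2) := rfl

theorem integral_unitInterval_smul_comp_mul {E : Type} [NormedAddCommGroup E] [NormedSpace ℝ E]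
    (f : ℝ → E) (b : ℝ) : b • ∫ τ : I, f (b * τ) = ∫ x in (0 : ℝ)..b, f x := by
  have h1 : ∫ τ : I, f (b * τ) = ∫ τ in (0 : ℝ)..1, f (b * τ) := by
    rw [intervalIntegral.integral_of_le zero_le_one, ← integral_Icc_eq_integral_Ioc]
    exact integral_subtype (measurableSet_Icc (a := (0 : ℝ)) (b := 1)) (fun τ : ℝ => f (b * τ))
  rw [h1, intervalIntegral.smul_integral_comp_mul_left]
  simp

/-- The inclusion of the unit square in the plane, stretched by `z`. -/
def stretch (z : ℝ × ℝ) : C(I × I, ℝ × ℝ) :=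
  z.1 • ⟨fun x => ((x.1 : ℝ), 0), by fun_prop⟩ + z.2 • ⟨fun x => (0, (x.2 : ℝ)), by fun_prop⟩

theorem stretch_apply (z : ℝ × ℝ) (x : I × I) : stretch z x = (z.1 * x.1, z.2 * x.2) := by
  simp [stretch]

theorem exists_smooth_integral_solution {E : Type} [NormedAddCommGroup E] [NormedSpace ℝ E]
    [CompleteSpace E] {D : ℝ × ℝ → E} {F G : E → E} (hD : ContDiff ℝ ∞ D) (hF : ContDiff ℝ ∞ F)
    (hG : ContDiff ℝ ∞ G) :
    ∃ u : ℝ × ℝ → E, ContDiff ℝ ∞ u ∧ ∃ δ > 0, ∀ z : ℝ × ℝ, ‖z‖ < δ →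
      u z = D z + (∫ b in (0 : ℝ)..z.2, F (u (z.1, b))) + ∫ a in (0 : ℝ)..z.1, G (u (a, z.2)) := by
  let D' : C(ℝ × ℝ, E) := ⟨D, hD.continuous⟩
  let F' : C(E, E) := ⟨F, hF.continuous⟩
  let G' : C(E, E) := ⟨G, hG.continuous⟩
  let R : (ℝ × ℝ) × C(I × I, E) → C(I × I, E) := fun w =>
    D'.comp (stretch w.1) + w.1.2 • primitiveSnd E (F'.comp w.2)
      + w.1.1 • primitiveFst E (G'.comp w.2)
  have hR : ContDiff ℝ ∞ R := by
    have hs : ContDiff ℝ ∞ stretch := by unfold stretch; fun_prop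
    have h1 : ContDiff ℝ ∞ fun w : (ℝ × ℝ) × C(I × I, E) => D'.comp (stretch w.1) :=
      (contDiff_superposition D' hD).comp (hs.comp contDiff_fst)
    have h2 : ContDiff ℝ ∞ fun w : (ℝ × ℝ) × C(I × I, E) => primitiveSnd E (F'.comp w.2) :=
      (primitiveSnd E).contDiff.comp ((contDiff_superposition F' hF).comp contDiff_snd)
    have h3 : ContDiff ℝ ∞ fun w : (ℝ × ℝ) × C(I × I, E) => primitiveFst E (G'.comp w.2) :=
      (primitiveFst E).contDiff.comp ((contDiff_superposition G' hG).comp contDiff_snd)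
    fun_prop
  have hR0 : ∀ W, R (0, W) = ContinuousMap.const _ (D 0) := by
    intro W
    ext x
    simp [R, D', stretch]
  have hRapply : ∀ z W x, R (z, W) x = D (z.1 * x.1, z.2 * x.2)
      + z.2 • (x.2 : ℝ) • (∫ τ : I, F (W (x.1, x.2 * τ)))
      + z.1 • (x.1 : ℝ) • ∫ τ : I, G (W (x.1 * τ, x.2)) := by
    intro z W x
    simp only [R, ContinuousMap.add_apply, ContinuousMap.smul_apply, primitiveFst_apply,
      primitiveSnd_apply, ContinuousMap.comp_apply, stretch_apply]
    rfl
  obtain ⟨φ, hφ0, hφ, huniq⟩ := exists_smooth_fixedPoint hR hR0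
  obtain ⟨ε, hε, huniq⟩ := Metric.eventually_nhds_iff_ball.1 huniq
  have hφc : ContinuousAt φ 0 := (hφ.self_of_nhds).1.continuousAt
  obtain ⟨u, hu, hue⟩ := exists_contDiff_eventuallyEq
    (f := fun z => φ z (1, 1)) (x := (0 : ℝ × ℝ)) (by
      filter_upwards [hφ] with z hz
      exact (ContinuousMap.evalCLM ℝ ((1, 1) : I × I)).contDiff.contDiffAt.comp z hz.1)
  have hclose : ∀ᶠ z in 𝓝 0, φ z ∈ Metric.ball (φ 0) ε :=
    hφc.eventually (Metric.ball_mem_nhds _ hε)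
  obtain ⟨δ, hδ, hall⟩ := Metric.eventually_nhds_iff_ball.1
    ((hφ.and hclose).and (hue.and (Metric.ball_mem_nhds (0 : ℝ × ℝ) hε)))
  have hmem : ∀ (z : ℝ × ℝ) (x : I × I), ‖z‖ < δ → ‖(z.1 * x.1, z.2 * x.2)‖ < δ := by
    intro z x hz
    refine lt_of_le_of_lt ?_ hz
    simp only [Prod.norm_def, norm_mul]
    refine max_le_max (mul_le_of_le_one_right (norm_nonneg _) ?_)
      (mul_le_of_le_one_right (norm_nonneg _) ?_)
    · rw [Real.norm_eq_abs, abs_of_nonneg x.1.2.1]; exact x.1.2.2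
    · rw [Real.norm_eq_abs, abs_of_nonneg x.2.2.1]; exact x.2.2.2
  have hscale : ∀ (z : ℝ × ℝ) (x : I × I), ‖z‖ < δ → φ z x = u (z.1 * x.1, z.2 * x.2) := by
    intro z x hz
    obtain ⟨⟨⟨-, hfix⟩, hball⟩, -⟩ := hall z (by simpa using hz)
    obtain ⟨-, hux, hxε⟩ := hall (z.1 * x.1, z.2 * x.2) (by simpa using hmem z x hz)
    let V : C(I × I, E) := (φ z).comp ⟨fun y => (x.1 * y.1, x.2 * y.2), by fun_prop⟩
    have hV : ∀ y, V y = φ z (x.1 * y.1, x.2 * y.2) := fun y => rfl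
    have hVball : dist V (φ 0) < ε := by
      refine lt_of_le_of_lt ((ContinuousMap.dist_le dist_nonneg).2 fun y => ?_) hball
      rw [hV, hφ0]
      have := ContinuousMap.dist_apply_le_dist (f := φ z) (g := φ 0) (x.1 * y.1, x.2 * y.2)
      rw [hφ0] at this
      exact this
    have hVfix : V = R ((z.1 * x.1, z.2 * x.2), V) := by
      ext y
      rw [hRapply, hV, hfix, hRapply]
      simp only [hV, Set.Icc.coe_mul, smul_smul, mul_assoc]
    have h1 := huniq ((z.1 * x.1, z.2 * x.2), V) (by
      rw [Metric.mem_ball, Prod.dist_eq, max_lt_iff]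
      refine ⟨hxε, ?_⟩
      rw [hφ0] at hVball
      exact hVball) hVfix
    have h2 := congrArg (fun W : C(I × I, E) => W (1, 1)) h1
    simp only [hV, mul_one, Prod.mk.eta] at h2
    rw [hux]
    exact h2
  refine ⟨u, hu, δ, hδ, fun z hz => ?_⟩
  obtain ⟨⟨⟨-, hfix⟩, -⟩, huz, -⟩ := hall z (by simpa using hz)
  have h1 : φ z (1, 1) = R (z, φ z) (1, 1) := congrArg (fun W : C(I × I, E) => W (1, 1)) hfix
  rw [hRapply] at h1
  simp only [hscale z _ hz, one_mul, Set.Icc.coe_one, mul_one, one_smul, Prod.mk.eta] at h1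
  rw [h1, ← integral_unitInterval_smul_comp_mul (fun b => F (u (z.1, b))),
    ← integral_unitInterval_smul_comp_mul (fun a => G (u (a, z.2)))]

/-! ### Partial derivatives in the plane -/

section Partial

variable {E : Type} [NormedAddCommGroup E] [NormedSpace ℝ E]

/-- The partial derivative in the first variable. -/
def dfst (f : ℝ × ℝ → E) (z : ℝ × ℝ) : E := fderiv ℝ f z (1, 0)

/-- The partial derivative in the second variable. -/
def dsnd (f : ℝ × ℝ → E) (z : ℝ × ℝ) : E := fderiv ℝ f z (0, 1)

theorem contDiff_dfst {f : ℝ × ℝ → E} (hf : ContDiff ℝ ∞ f) : ContDiff ℝ ∞ (dfst f) :=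
  (hf.fderiv_right (m := ∞) (by simp)).clm_apply contDiff_const

theorem contDiff_dsnd {f : ℝ × ℝ → E} (hf : ContDiff ℝ ∞ f) : ContDiff ℝ ∞ (dsnd f) :=
  (hf.fderiv_right (m := ∞) (by simp)).clm_apply contDiff_const

theorem hasDerivAt_dfst {f : ℝ × ℝ → E} (hf : ContDiff ℝ ∞ f) (a b : ℝ) :
    HasDerivAt (fun s => f (s, b)) (dfst f (a, b)) a :=
  ((hf.differentiable (by simp) (a, b)).hasFDerivAt).comp_hasDerivAt a
    ((hasDerivAt_id a).prodMk (hasDerivAt_const a b))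

theorem hasDerivAt_dsnd {f : ℝ × ℝ → E} (hf : ContDiff ℝ ∞ f) (a b : ℝ) :
    HasDerivAt (fun s => f (a, s)) (dsnd f (a, b)) b :=
  ((hf.differentiable (by simp) (a, b)).hasFDerivAt).comp_hasDerivAt b
    ((hasDerivAt_const b a).prodMk (hasDerivAt_id b))

theorem Filter.EventuallyEq.dfst {f g : ℝ × ℝ → E} {z : ℝ × ℝ} (h : f =ᶠ[𝓝 z] g) :
    dfst f =ᶠ[𝓝 z] dfst g := by
  filter_upwards [h.fderiv (𝕜 := ℝ)] with y hy
  simp only [_root_.dfst, hy]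

theorem Filter.EventuallyEq.dsnd {f g : ℝ × ℝ → E} {z : ℝ × ℝ} (h : f =ᶠ[𝓝 z] g) :
    dsnd f =ᶠ[𝓝 z] dsnd g := by
  filter_upwards [h.fderiv (𝕜 := ℝ)] with y hy
  simp only [_root_.dsnd, hy]

theorem dfst_dsnd_comm {f : ℝ × ℝ → E} (hf : ContDiff ℝ ∞ f) (z : ℝ × ℝ) :
    dfst (dsnd f) z = dsnd (dfst f) z := by
  have hd : ContDiff ℝ ∞ (fderiv ℝ f) := hf.fderiv_right (by simp)
  have h2 := (hd.differentiable (by simp) z).hasFDerivAt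
  have h := second_derivative_symmetric (f := f) (x := z)
    (fun y => (hf.differentiable (by simp) y).hasFDerivAt) h2 (1, 0) (0, 1)
  have key : ∀ v w : ℝ × ℝ, fderiv ℝ (fun y => fderiv ℝ f y v) z w
      = fderiv ℝ (fderiv ℝ f) z w v := by
    intro v w
    rw [(h2.clm_apply (hasFDerivAt_const v z)).fderiv]
    simp
  change fderiv ℝ (fun y => fderiv ℝ f y (0, 1)) z (1, 0)
    = fderiv ℝ (fun y => fderiv ℝ f y (1, 0)) z (0, 1)
  rw [key, key, h]

theorem dfst_mul {f g : ℝ × ℝ → ℝ} (hf : ContDiff ℝ ∞ f) (hg : ContDiff ℝ ∞ g) (z : ℝ × ℝ) :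
    dfst (fun z => f z * g z) z = dfst f z * g z + f z * dfst g z := by
  unfold dfst
  rw [fderiv_fun_mul (hf.differentiable (by simp) z) (hg.differentiable (by simp) z)]
  simp
  ring

theorem dsnd_mul {f g : ℝ × ℝ → ℝ} (hf : ContDiff ℝ ∞ f) (hg : ContDiff ℝ ∞ g) (z : ℝ × ℝ) :
    dsnd (fun z => f z * g z) z = dsnd f z * g z + f z * dsnd g z := by
  unfold dsnd
  rw [fderiv_fun_mul (hf.differentiable (by simp) z) (hg.differentiable (by simp) z)]
  simp
  ring

theorem dfst_add {f g : ℝ × ℝ → E} (hf : ContDiff ℝ ∞ f) (hg : ContDiff ℝ ∞ g) (z : ℝ × ℝ) :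
    dfst (fun z => f z + g z) z = dfst f z + dfst g z := by
  unfold dfst
  rw [fderiv_fun_add (hf.differentiable (by simp) z) (hg.differentiable (by simp) z)]
  simp

theorem dsnd_add {f g : ℝ × ℝ → E} (hf : ContDiff ℝ ∞ f) (hg : ContDiff ℝ ∞ g) (z : ℝ × ℝ) :
    dsnd (fun z => f z + g z) z = dsnd f z + dsnd g z := by
  unfold dsnd
  rw [fderiv_fun_add (hf.differentiable (by simp) z) (hg.differentiable (by simp) z)]
  simp

theorem dfst_neg (f : ℝ × ℝ → E) (z : ℝ × ℝ) : dfst (fun z => -f z) z = -dfst f z := by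
  unfold dfst
  rw [fderiv_fun_neg]
  simp

theorem dsnd_neg (f : ℝ × ℝ → E) (z : ℝ × ℝ) : dsnd (fun z => -f z) z = -dsnd f z := by
  unfold dsnd
  rw [fderiv_fun_neg]
  simp

theorem dfst_sum {ι : Type} [Fintype ι] {f : ι → ℝ × ℝ → E} (hf : ∀ i, ContDiff ℝ ∞ (f i))
    (z : ℝ × ℝ) : dfst (fun z => ∑ i, f i z) z = ∑ i, dfst (f i) z := by
  unfold dfst
  rw [fderiv_fun_sum fun i _ => (hf i).differentiable (by simp) z]
  simp

theorem dsnd_sum {ι : Type} [Fintype ι] {f : ι → ℝ × ℝ → E} (hf : ∀ i, ContDiff ℝ ∞ (f i))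
    (z : ℝ × ℝ) : dsnd (fun z => ∑ i, f i z) z = ∑ i, dsnd (f i) z := by
  unfold dsnd
  rw [fderiv_fun_sum fun i _ => (hf i).differentiable (by simp) z]
  simp

theorem fderiv_apply_eq {f : ℝ × ℝ → ℝ} (z v : ℝ × ℝ) :
    fderiv ℝ f z v = dfst f z * v.1 + dsnd f z * v.2 := by
  have hv : v = v.1 • ((1, 0) : ℝ × ℝ) + v.2 • ((0, 1) : ℝ × ℝ) := by ext <;> simp
  conv_lhs => rw [hv]
  rw [map_add, map_smul, map_smul, dfst, dsnd, smul_eq_mul, smul_eq_mul]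
  ring

theorem fderiv_comp_prodMk {f x y : ℝ × ℝ → ℝ} (hf : ContDiff ℝ ∞ f) (hx : ContDiff ℝ ∞ x)
    (hy : ContDiff ℝ ∞ y) (z v : ℝ × ℝ) :
    fderiv ℝ (fun z => f (x z, y z)) z v
      = dfst f (x z, y z) * fderiv ℝ x z v + dsnd f (x z, y z) * fderiv ℝ y z v := by
  have h : HasFDerivAt (fun z => f (x z, y z))
      (fderiv ℝ f (x z, y z) ∘L (fderiv ℝ x z).prod (fderiv ℝ y z)) z :=
    HasFDerivAt.comp z (hf.differentiable (by simp) (x z, y z)).hasFDerivAt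
      ((hx.differentiable (by simp) z).hasFDerivAt.prodMk
        (hy.differentiable (by simp) z).hasFDerivAt)
  rw [h.fderiv]
  simp [fderiv_apply_eq]

theorem dfst_comp_prodMk {f x y : ℝ × ℝ → ℝ} (hf : ContDiff ℝ ∞ f) (hx : ContDiff ℝ ∞ x)
    (hy : ContDiff ℝ ∞ y) (z : ℝ × ℝ) :
    dfst (fun z => f (x z, y z)) z
      = dfst f (x z, y z) * dfst x z + dsnd f (x z, y z) * dfst y z :=
  fderiv_comp_prodMk hf hx hy z _

theorem dsnd_comp_prodMk {f x y : ℝ × ℝ → ℝ} (hf : ContDiff ℝ ∞ f) (hx : ContDiff ℝ ∞ x)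
    (hy : ContDiff ℝ ∞ y) (z : ℝ × ℝ) :
    dsnd (fun z => f (x z, y z)) z
      = dfst f (x z, y z) * dsnd x z + dsnd f (x z, y z) * dsnd y z :=
  fderiv_comp_prodMk hf hx hy z _

theorem ContinuousLinearMap.dfst_comp {F : Type} [NormedAddCommGroup F] [NormedSpace ℝ F]
    (L : E →L[ℝ] F) {f : ℝ × ℝ → E} (hf : ContDiff ℝ ∞ f) (z : ℝ × ℝ) :
    dfst (fun z => L (f z)) z = L (dfst f z) := by
  unfold dfst
  have h : HasFDerivAt (fun z => L (f z)) (L ∘L fderiv ℝ f z) z :=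
    L.hasFDerivAt.comp z (hf.differentiable (by simp) z).hasFDerivAt
  rw [h.fderiv]
  rfl

theorem ContinuousLinearMap.dsnd_comp {F : Type} [NormedAddCommGroup F] [NormedSpace ℝ F]
    (L : E →L[ℝ] F) {f : ℝ × ℝ → E} (hf : ContDiff ℝ ∞ f) (z : ℝ × ℝ) :
    dsnd (fun z => L (f z)) z = L (dsnd f z) := by
  unfold dsnd
  have h : HasFDerivAt (fun z => L (f z)) (L ∘L fderiv ℝ f z) z :=
    L.hasFDerivAt.comp z (hf.differentiable (by simp) z).hasFDerivAt
  rw [h.fderiv]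
  rfl

end Partial

/-! ### The characteristic problem and linear systems of Frobenius type -/

/-- Smooth local solvability of the characteristic initial value problem. -/
theorem exists_goursat {M N : Type} [NormedAddCommGroup M] [NormedSpace ℝ M] [CompleteSpace M]
    [NormedAddCommGroup N] [NormedSpace ℝ N] [CompleteSpace N]
    {F : (ℝ × ℝ) × M × N → M} {G : (ℝ × ℝ) × M × N → N} {U₀ : ℝ → M} {Z₀ : ℝ → N}
    (hF : ContDiff ℝ ∞ F) (hG : ContDiff ℝ ∞ G) (hU₀ : ContDiff ℝ ∞ U₀)
    (hZ₀ : ContDiff ℝ ∞ Z₀) :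
    ∃ (U : ℝ × ℝ → M) (Z : ℝ × ℝ → N), ContDiff ℝ ∞ U ∧ ContDiff ℝ ∞ Z ∧
      ∀ᶠ z in 𝓝 (0 : ℝ × ℝ), dsnd U z = F (z, U z, Z z) ∧ dfst Z z = G (z, U z, Z z) ∧
        U (z.1, 0) = U₀ z.1 ∧ Z (0, z.2) = Z₀ z.2 := by
  obtain ⟨u, hu, δ, hδ, heq⟩ := exists_smooth_integral_solution
    (D := fun z : ℝ × ℝ => (z, U₀ z.1, Z₀ z.2)) (F := fun w => ((0 : ℝ × ℝ), F w, (0 : N)))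
    (G := fun w => ((0 : ℝ × ℝ), (0 : M), G w)) (by fun_prop) (by fun_prop) (by fun_prop)
  have huc : Continuous u := hu.continuous
  have hFc : Continuous F := hF.continuous
  have hGc : Continuous G := hG.continuous
  have hproj : ∀ {X : Type} [NormedAddCommGroup X] [NormedSpace ℝ X] [CompleteSpace X]
      (L : (ℝ × ℝ) × M × N →L[ℝ] X) (z : ℝ × ℝ), ‖z‖ < δ →
      L (u z) = L (z, U₀ z.1, Z₀ z.2) + (∫ b in (0 : ℝ)..z.2, L (0, F (u (z.1, b)), 0))
        + ∫ a in (0 : ℝ)..z.1, L (0, 0, G (u (a, z.2))) := by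
    intro X _ _ _ L z hz
    rw [L.intervalIntegral_comp_comm (Continuous.intervalIntegrable (by fun_prop) _ _),
      L.intervalIntegral_comp_comm (Continuous.intervalIntegrable (by fun_prop) _ _)]
    conv_lhs => rw [heq z hz]
    rw [map_add, map_add]
  have h1 : ∀ z : ℝ × ℝ, ‖z‖ < δ → (u z).1 = z := fun z hz => by
    simpa using hproj (ContinuousLinearMap.fst ℝ _ _) z hz
  have h2 : ∀ z : ℝ × ℝ, ‖z‖ < δ → (u z).2.1 = U₀ z.1 + ∫ b in (0 : ℝ)..z.2, F (u (z.1, b)) :=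
    fun z hz => by
      simpa using hproj (ContinuousLinearMap.fst ℝ _ _ ∘L ContinuousLinearMap.snd ℝ _ _) z hz
  have h3 : ∀ z : ℝ × ℝ, ‖z‖ < δ → (u z).2.2 = Z₀ z.2 + ∫ a in (0 : ℝ)..z.1, G (u (a, z.2)) :=
    fun z hz => by
      simpa using hproj (ContinuousLinearMap.snd ℝ _ _ ∘L ContinuousLinearMap.snd ℝ _ _) z hz
  have hU : ContDiff ℝ ∞ fun z => (u z).2.1 := by fun_prop
  have hZ : ContDiff ℝ ∞ fun z => (u z).2.2 := by fun_prop
  refine ⟨fun z => (u z).2.1, fun z => (u z).2.2, hU, hZ, ?_⟩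
  have hball : ∀ᶠ z in 𝓝 (0 : ℝ × ℝ), ‖z‖ < δ := by
    filter_upwards [Metric.ball_mem_nhds (0 : ℝ × ℝ) hδ] with z hz
    simpa using hz
  filter_upwards [hball] with z hz
  have huz : (z, (u z).2.1, (u z).2.2) = u z := Prod.ext (h1 z hz).symm rfl
  have hnear : ∀ᶠ y in 𝓝 z, ‖y‖ < δ := continuous_norm.continuousAt.eventually (gt_mem_nhds hz)
  refine ⟨?_, ?_, ?_, ?_⟩
  · have hd := hasDerivAt_dsnd hU z.1 z.2
    have hi : HasDerivAt (fun b => U₀ z.1 + ∫ b in (0 : ℝ)..b, F (u (z.1, b)))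
        (F (u (z.1, z.2))) z.2 :=
      ((by fun_prop : Continuous fun b => F (u (z.1, b))).integral_hasStrictDerivAt 0
        z.2).hasDerivAt.const_add _
    have hc : ContinuousAt (fun b : ℝ => (z.1, b)) z.2 := by fun_prop
    have hev : (fun b => (u (z.1, b)).2.1) =ᶠ[𝓝 z.2]
        fun b => U₀ z.1 + ∫ b in (0 : ℝ)..b, F (u (z.1, b)) := by
      filter_upwards [hc.eventually hnear] with b hb using h2 _ hb
    rw [huz]
    exact hd.unique (hi.congr_of_eventuallyEq hev)
  · have hd := hasDerivAt_dfst hZ z.1 z.2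
    have hi : HasDerivAt (fun a => Z₀ z.2 + ∫ a in (0 : ℝ)..a, G (u (a, z.2)))
        (G (u (z.1, z.2))) z.1 :=
      ((by fun_prop : Continuous fun a => G (u (a, z.2))).integral_hasStrictDerivAt 0
        z.1).hasDerivAt.const_add _
    have hc : ContinuousAt (fun a : ℝ => (a, z.2)) z.1 := by fun_prop
    have hev : (fun a => (u (a, z.2)).2.2) =ᶠ[𝓝 z.1]
        fun a => Z₀ z.2 + ∫ a in (0 : ℝ)..a, G (u (a, z.2)) := by
      filter_upwards [hc.eventually hnear] with a ha using h3 _ ha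
    rw [huz]
    exact hd.unique (hi.congr_of_eventuallyEq hev)
  · have hz' : ‖(z.1, (0 : ℝ))‖ < δ := lt_of_le_of_lt (by simp [Prod.norm_def]) hz
    simpa using h2 _ hz'
  · have hz' : ‖((0 : ℝ), z.2)‖ < δ := lt_of_le_of_lt (by simp [Prod.norm_def]) hz
    simpa using h3 _ hz'

theorem eq_zero_of_hasDerivAt_linear {ι : Type} [Fintype ι] {T : ι → ι → ℝ → ℝ}
    (hT : ∀ i j, Continuous (T i j)) {y : ι → ℝ → ℝ} {δ : ℝ}
    (hy : ∀ t, |t| < δ → ∀ i, HasDerivAt (y i) (∑ j, T i j t * y j t) t) (h0 : ∀ i, y i 0 = 0)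
    {t : ℝ} (ht : |t| < δ) (i : ι) : y i t = 0 := by
  obtain ⟨r, htr, hrδ⟩ := exists_between ht
  have hr : 0 < r := (abs_nonneg t).trans_lt htr
  have hbound : ∀ i j, ∃ C, ∀ s ∈ Icc (-r) r, ‖T i j s‖ ≤ C := fun i j =>
    isCompact_Icc.exists_bound_of_continuousOn (hT i j).continuousOn
  choose C hC using hbound
  have hC0 : ∀ i j, 0 ≤ C i j := fun i j =>
    (norm_nonneg _).trans (hC i j 0 ⟨by linarith, by linarith⟩)
  let K : ℝ := ∑ i, ∑ j, C i j
  have hK : 0 ≤ K := Finset.sum_nonneg fun i _ => Finset.sum_nonneg fun j _ => hC0 i j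
  have hlt : ∀ s ∈ Icc (-r) r, |s| < δ := fun s hs => (abs_le.2 hs).trans_lt hrδ
  have huniq := ODE_solution_unique_of_mem_Icc (v := fun s (x : ι → ℝ) i => ∑ j, T i j s * x j)
    (s := fun _ => univ) (K := K.toNNReal) (f := fun s i => y i s) (g := fun _ _ => 0)
    (a := -r) (b := r) (t₀ := 0) (fun s hs => by
      refine LipschitzWith.lipschitzOnWith (LipschitzWith.of_dist_le_mul fun x x' => ?_)
      rw [Real.coe_toNNReal _ hK, dist_pi_le_iff (by positivity)]
      intro i
      rw [Real.dist_eq, ← Finset.sum_sub_distrib]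
      calc |∑ j, (T i j s * x j - T i j s * x' j)| ≤ ∑ j, |T i j s * x j - T i j s * x' j| :=
            Finset.abs_sum_le_sum_abs _ _
        _ ≤ ∑ j, C i j * dist x x' := Finset.sum_le_sum fun j _ => by
            rw [← mul_sub, abs_mul]
            exact mul_le_mul (hC i j s (Ioo_subset_Icc_self hs)) (dist_le_pi_dist x x' j)
              (abs_nonneg _) (hC0 i j)
        _ = (∑ j, C i j) * dist x x' := by rw [Finset.sum_mul]
        _ ≤ K * dist x x' := mul_le_mul_of_nonneg_right
            (Finset.single_le_sum (f := fun i => ∑ j, C i j)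
              (fun i _ => Finset.sum_nonneg fun j _ => hC0 i j) (Finset.mem_univ i)) dist_nonneg)
    ⟨by linarith, hr⟩
    (continuousOn_pi.2 fun i s hs => (hy s (hlt s hs) i).continuousAt.continuousWithinAt)
    (fun s hs => hasDerivAt_pi.2 fun i => hy s (hlt s (Ioo_subset_Icc_self hs)) i)
    (fun _ _ => mem_univ _) continuousOn_const
    (fun s _ => by
      simp only [mul_zero, Finset.sum_const_zero]
      exact hasDerivAt_const s (0 : ι → ℝ)) (fun _ _ => mem_univ _)
    (funext h0)
  exact congrFun (huniq (abs_le.1 htr.le)) i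

/-- A linear system whose compatibility condition holds near the origin has smooth solutions
there, with arbitrary value at the origin. -/
theorem exists_frobenius {ι : Type} [Fintype ι] {S T : ι → ι → ℝ × ℝ → ℝ}
    (hS : ∀ i j, ContDiff ℝ ∞ (S i j)) (hT : ∀ i j, ContDiff ℝ ∞ (T i j))
    (hST : ∀ᶠ z in 𝓝 (0 : ℝ × ℝ), ∀ i k, dsnd (S i k) z + ∑ j, S i j z * T j k z
      = dfst (T i k) z + ∑ j, T i j z * S j k z) (c : ι → ℝ) :
    ∃ w : ι → ℝ × ℝ → ℝ, (∀ i, ContDiff ℝ ∞ (w i)) ∧ (∀ i, w i 0 = c i) ∧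
      ∀ᶠ z in 𝓝 (0 : ℝ × ℝ), ∀ i, dfst (w i) z = ∑ j, S i j z * w j z ∧
        dsnd (w i) z = ∑ j, T i j z * w j z := by
  obtain ⟨_, Z, _, hZ, hZe⟩ := exists_goursat (M := ℝ) (N := ι → ℝ) (F := fun _ => 0)
    (G := fun w i => ∑ j, S i j (w.1.1, 0) * w.2.2 j) (U₀ := fun _ => 0) (Z₀ := fun _ => c)
    (by fun_prop) (by fun_prop) (by fun_prop) (by fun_prop)
  obtain ⟨W, _, hW, _, hWe⟩ := exists_goursat (M := ι → ℝ) (N := ℝ)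
    (F := fun w i => ∑ j, T i j w.1 * w.2.1 j) (G := fun _ => 0) (U₀ := fun a => Z (a, 0))
    (Z₀ := fun _ => 0) (by fun_prop) (by fun_prop) (by fun_prop) (by fun_prop)
  have hw : ∀ i, ContDiff ℝ ∞ fun z => W z i := fun i => by fun_prop
  have hdsnd : ∀ᶠ z in 𝓝 (0 : ℝ × ℝ), ∀ i, dsnd (fun z => W z i) z = ∑ j, T i j z * W z j := by
    filter_upwards [hWe] with z hz i
    have h := (ContinuousLinearMap.proj (R := ℝ) (φ := fun _ : ι => ℝ) i).dsnd_comp hW z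
    rw [hz.1] at h
    exact h
  have hinit : ∀ᶠ z in 𝓝 (0 : ℝ × ℝ), ∀ i,
      dfst (fun z => W z i) (z.1, 0) = ∑ j, S i j (z.1, 0) * W (z.1, 0) j := by
    have hc : Tendsto (fun z : ℝ × ℝ => (z.1, (0 : ℝ))) (𝓝 0) (𝓝 0) := by
      have : Continuous fun z : ℝ × ℝ => (z.1, (0 : ℝ)) := by fun_prop
      exact this.tendsto (0 : ℝ × ℝ)
    filter_upwards [(hc.eventually hWe).eventually_nhds, hc.eventually hZe] with z hz hz' i
    have hc' : Tendsto (fun a : ℝ => (a, z.2)) (𝓝 z.1) (𝓝 z) := by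
      have : Continuous fun a : ℝ => (a, z.2) := by fun_prop
      exact this.tendsto z.1
    have hev : (fun a => W (a, 0) i) =ᶠ[𝓝 z.1] fun a => Z (a, 0) i := by
      filter_upwards [hc'.eventually hz] with a ha
      exact congrFun ha.2.2.1 i
    have h1 := hasDerivAt_dfst (hw i) z.1 0
    have h2 := hasDerivAt_pi.1 (hasDerivAt_dfst hZ z.1 0) i
    rw [h1.unique (h2.congr_of_eventuallyEq hev), hz'.2.1, show W (z.1, 0) = Z (z.1, 0) from
      hz.self_of_nhds.2.2.1]
  have hdfst : ∀ᶠ z in 𝓝 (0 : ℝ × ℝ), ∀ i, dfst (fun z => W z i) z = ∑ j, S i j z * W z j := by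
    obtain ⟨δ, hδ, hall⟩ := Metric.eventually_nhds_iff_ball.1
      ((hdsnd.eventually_nhds.and hinit).and hST)
    filter_upwards [Metric.ball_mem_nhds (0 : ℝ × ℝ) hδ] with z hz i
    rw [mem_ball_zero_iff, Prod.norm_def, max_lt_iff] at hz
    have hmem : ∀ t : ℝ, |t| < δ → (z.1, t) ∈ Metric.ball (0 : ℝ × ℝ) δ := fun t ht => by
      rw [mem_ball_zero_iff, Prod.norm_def, max_lt_iff]
      exact ⟨hz.1, ht⟩
    let D : ι → ℝ × ℝ → ℝ := fun i z => dfst (fun z => W z i) z + -∑ j, S i j z * W z j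
    have hSW : ∀ i j, ContDiff ℝ ∞ fun z => S i j z * W z j := fun i j => (hS i j).mul (hw j)
    have hSW' : ∀ i, ContDiff ℝ ∞ fun z => ∑ j, S i j z * W z j := fun i =>
      ContDiff.sum fun j _ => hSW i j
    have hTW : ∀ i j, ContDiff ℝ ∞ fun z => T i j z * W z j := fun i j => (hT i j).mul (hw j)
    have hD : ∀ i, ContDiff ℝ ∞ (D i) := fun i => (contDiff_dfst (hw i)).add (hSW' i).neg
    have key := eq_zero_of_hasDerivAt_linear (T := fun i j t => T i j (z.1, t))
      (y := fun i t => D i (z.1, t)) (δ := δ) (fun i j => by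
        have := (hT i j).continuous
        fun_prop) (fun t ht i => by
        obtain ⟨⟨h1, -⟩, h3⟩ := hall _ (hmem t ht)
        have h1' : ∀ i, dsnd (fun z => W z i) =ᶠ[𝓝 (z.1, t)] fun z => ∑ j, T i j z * W z j :=
          fun i => by filter_upwards [h1] with y hy using hy i
        have hval : dsnd (D i) (z.1, t) = ∑ j, T i j (z.1, t) * D j (z.1, t) := by
          simp only [D]
          rw [dsnd_add (contDiff_dfst (hw i)) (hSW' i).neg, dsnd_neg, dsnd_sum (hSW i),
            ← dfst_dsnd_comm (hw i), ((h1' i).dfst).self_of_nhds, dfst_sum (hTW i)]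
          simp only [dsnd_mul (hS i _) (hw _), dfst_mul (hT i _) (hw _), (h1' _).self_of_nhds,
            mul_add, mul_neg, Finset.sum_add_distrib, Finset.sum_neg_distrib, Finset.mul_sum]
          have e1 : ∑ k, (dsnd (S i k) (z.1, t) + ∑ j, S i j (z.1, t) * T j k (z.1, t))
              * W (z.1, t) k = ∑ k, (dfst (T i k) (z.1, t)
                + ∑ j, T i j (z.1, t) * S j k (z.1, t)) * W (z.1, t) k :=
            Finset.sum_congr rfl fun k _ => by rw [h3 i k]
          simp only [add_mul, Finset.sum_add_distrib, Finset.sum_mul] at e1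
          rw [Finset.sum_comm (f := fun x i_1 => S i i_1 (z.1, t) * _ * _),
            Finset.sum_comm (f := fun x i_1 => T i i_1 (z.1, t) * _ * _)] at e1
          simp only [mul_assoc] at e1
          linarith
        have := hasDerivAt_dsnd (hD i) z.1 t
        rwa [hval] at this) (fun i => by
        obtain ⟨⟨-, h2⟩, -⟩ := hall _ (hmem 0 (by simpa using hδ))
        simp only [D]
        rw [h2 i]
        simp) hz.2 i
    simp only [D, Prod.mk.eta] at key
    linarith
  refine ⟨fun i z => W z i, hw, fun i => ?_, ?_⟩
  · have h1 := hWe.self_of_nhds.2.2.1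
    have h2 := hZe.self_of_nhds.2.2.2
    simp only [Prod.fst_zero, Prod.snd_zero] at h1 h2
    change W (0, 0) i = c i
    rw [h1, h2]
  · filter_upwards [hdfst, hdsnd] with z h1 h2 i using ⟨h1 i, h2 i⟩

/-! ### Asymptotic coordinates -/

/-- Local solvability of the semilinear equation `∂₁∂₂X = B (X, ∂₁X, ∂₂X)` for maps of the plane,
with first-order Taylor polynomial `z ↦ p + z` at the origin. -/
theorem exists_semilinear_wave {B : (ℝ × ℝ) × (ℝ × ℝ) × (ℝ × ℝ) → ℝ × ℝ} (hB : ContDiff ℝ ∞ B)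
    (p : ℝ × ℝ) :
    ∃ X : ℝ × ℝ → ℝ × ℝ, ContDiff ℝ ∞ X ∧ X 0 = p ∧ dfst X 0 = (1, 0) ∧ dsnd X 0 = (0, 1) ∧
      ∀ᶠ z in 𝓝 (0 : ℝ × ℝ), dfst (dsnd X) z = B (X z, dfst X z, dsnd X z) := by
  obtain ⟨P, Z, hP, hZ, hev⟩ := exists_goursat (M := ℝ × ℝ) (N := (ℝ × ℝ) × (ℝ × ℝ))
    (F := fun w => B (w.2.2.1, w.2.1, w.2.2.2))
    (G := fun w => (w.2.1, B (w.2.2.1, w.2.1, w.2.2.2)))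
    (U₀ := fun _ => (1, 0)) (Z₀ := fun t => (p + (0, t), (0, 1)))
    (by fun_prop) (by fun_prop) (by fun_prop) (by fun_prop)
  have hX : ContDiff ℝ ∞ fun z => (Z z).1 := by fun_prop
  have hQ : ContDiff ℝ ∞ fun z => (Z z).2 := by fun_prop
  have hXa : ∀ᶠ z in 𝓝 (0 : ℝ × ℝ), dfst (fun z => (Z z).1) z = P z := by
    filter_upwards [hev] with z hz
    have h := (ContinuousLinearMap.fst ℝ (ℝ × ℝ) (ℝ × ℝ)).dfst_comp hZ z
    rw [hz.2.1] at h
    exact h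
  have hQa : ∀ᶠ z in 𝓝 (0 : ℝ × ℝ),
      dfst (fun z => (Z z).2) z = B ((Z z).1, P z, (Z z).2) := by
    filter_upwards [hev] with z hz
    have h := (ContinuousLinearMap.snd ℝ (ℝ × ℝ) (ℝ × ℝ)).dfst_comp hZ z
    rw [hz.2.1] at h
    exact h
  have hXb0 : ∀ᶠ z in 𝓝 (0 : ℝ × ℝ), dsnd (fun z => (Z z).1) (0, z.2) = (Z (0, z.2)).2 := by
    filter_upwards [hev.eventually_nhds] with z hz
    have hc : Tendsto (fun b : ℝ => (z.1, b)) (𝓝 z.2) (𝓝 z) := by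
      have : Continuous fun b : ℝ => (z.1, b) := by fun_prop
      exact this.tendsto z.2
    have h1 := hasDerivAt_dsnd hX 0 z.2
    have h2 : HasDerivAt (fun t : ℝ => p + ((0 : ℝ), t)) (0, 1) z.2 :=
      ((hasDerivAt_const z.2 (0 : ℝ)).prodMk (hasDerivAt_id z.2)).const_add p
    have he : (fun t => (Z (0, t)).1) =ᶠ[𝓝 z.2] fun t : ℝ => p + ((0 : ℝ), t) := by
      filter_upwards [hc.eventually hz] with t ht
      rw [ht.2.2.2]
    rw [h1.unique (h2.congr_of_eventuallyEq he), hz.self_of_nhds.2.2.2]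
  have hXb : ∀ᶠ z in 𝓝 (0 : ℝ × ℝ), dsnd (fun z => (Z z).1) z = (Z z).2 := by
    obtain ⟨δ, hδ, hall⟩ := Metric.eventually_nhds_iff_ball.1
      ((hev.and (hXa.eventually_nhds.and hQa)).and hXb0)
    filter_upwards [Metric.ball_mem_nhds (0 : ℝ × ℝ) hδ] with z hz
    rw [mem_ball_zero_iff, Prod.norm_def, max_lt_iff] at hz
    have hmem : ∀ t ∈ Metric.ball (0 : ℝ) δ, (t, z.2) ∈ Metric.ball (0 : ℝ × ℝ) δ := fun t ht => by
      rw [mem_ball_zero_iff] at ht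
      rw [mem_ball_zero_iff, Prod.norm_def, max_lt_iff]
      exact ⟨ht, hz.2⟩
    have hd : ∀ t ∈ Metric.ball (0 : ℝ) δ,
        HasDerivAt (fun t => dsnd (fun z => (Z z).1) (t, z.2) - (Z (t, z.2)).2) 0 t := by
      intro t ht
      obtain ⟨⟨h1, h2, h3⟩, -⟩ := hall _ (hmem t ht)
      have h := (hasDerivAt_dfst (contDiff_dsnd hX) t z.2).sub (hasDerivAt_dfst hQ t z.2)
      have h2' : dfst (fun z => (Z z).1) =ᶠ[𝓝 (t, z.2)] P := h2
      rw [dfst_dsnd_comm hX, h2'.dsnd.self_of_nhds, h3, h1.1, sub_self] at h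
      exact h
    have h0 : (0 : ℝ) ∈ Metric.ball (0 : ℝ) δ := Metric.mem_ball_self hδ
    have hconst := (Metric.isOpen_ball (x := (0 : ℝ)) (ε := δ)).is_const_of_deriv_eq_zero
      (convex_ball (0 : ℝ) δ).isPreconnected
      (fun t ht => (hd t ht).differentiableAt.differentiableWithinAt)
      (fun t ht => (hd t ht).deriv) (by simpa using hz.1 : z.1 ∈ Metric.ball (0 : ℝ) δ) h0
    have h1 := (hall _ (hmem 0 h0)).2
    simp only [h1, sub_self] at hconst
    exact sub_eq_zero.1 hconst
  refine ⟨fun z => (Z z).1, hX, ?_, ?_, ?_, ?_⟩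
  · have h := hev.self_of_nhds.2.2.2
    simp only [Prod.snd_zero] at h
    change (Z (0, 0)).1 = p
    rw [h]
    simp
  · rw [hXa.self_of_nhds]
    exact hev.self_of_nhds.2.2.1
  · rw [hXb.self_of_nhds]
    have h := hev.self_of_nhds.2.2.2
    simp only [Prod.snd_zero] at h
    change (Z (0, 0)).2 = _
    rw [h]
  · filter_upwards [hXb.eventually_nhds, hXa, hQa] with z h1 h2 h3
    have h1' : dsnd (fun z => (Z z).1) =ᶠ[𝓝 z] fun z => (Z z).2 := h1
    rw [h1'.dfst.self_of_nhds, h3, h2, h1'.self_of_nhds]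

/-! ### Reconstruction of a surface from its moving frame -/

theorem dfst_const (r : ℝ) (z : ℝ × ℝ) : dfst (fun _ => r) z = 0 := by simp [dfst]

theorem dsnd_const (r : ℝ) (z : ℝ × ℝ) : dsnd (fun _ => r) z = 0 := by simp [dsnd]

theorem eventually_eq_apply_zero {f : ℝ × ℝ → ℝ} (hf : ContDiff ℝ ∞ f)
    (h : ∀ᶠ z in 𝓝 (0 : ℝ × ℝ), dfst f z = 0 ∧ dsnd f z = 0) :
    ∀ᶠ z in 𝓝 (0 : ℝ × ℝ), f z = f 0 := by
  obtain ⟨δ, hδ, hall⟩ := Metric.eventually_nhds_iff_ball.1 h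
  filter_upwards [Metric.ball_mem_nhds (0 : ℝ × ℝ) hδ] with z hz
  refine (Metric.isOpen_ball (x := (0 : ℝ × ℝ)) (ε := δ)).is_const_of_fderiv_eq_zero (𝕜 := ℝ)
    (convex_ball (0 : ℝ × ℝ) δ).isPreconnected (hf.differentiable (by simp)).differentiableOn
    (fun y hy => ?_) hz (Metric.mem_ball_self hδ)
  ext <;> simp [fderiv_apply_eq, hall y hy]

/-- The fundamental theorem of surface theory in asymptotic coordinates: `p`, `q` are the
components of the coordinate vector fields in an orthonormal frame, `s`, `t` the components of
the connection form, and `k` is the square root of minus the curvature. -/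
theorem exists_surface_of_gauss_codazzi {p₁ p₂ q₁ q₂ s t k : ℝ × ℝ → ℝ} (hp₁ : ContDiff ℝ ∞ p₁)
    (hp₂ : ContDiff ℝ ∞ p₂) (hq₁ : ContDiff ℝ ∞ q₁) (hq₂ : ContDiff ℝ ∞ q₂)
    (hs : ContDiff ℝ ∞ s) (ht : ContDiff ℝ ∞ t) (hk : ContDiff ℝ ∞ k)
    (h : ∀ᶠ z in 𝓝 (0 : ℝ × ℝ),
      dfst q₁ z - dsnd p₁ z = s z * q₂ z - t z * p₂ z ∧
      dfst q₂ z - dsnd p₂ z = -(s z * q₁ z - t z * p₁ z) ∧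
      dfst t z - dsnd s z = k z ^ 2 * (p₁ z * q₂ z - p₂ z * q₁ z) ∧
      dfst (fun z => k z * q₂ z) z + dsnd (fun z => k z * p₂ z) z
        = -(k z * (s z * q₁ z + t z * p₁ z)) ∧
      dfst (fun z => k z * q₁ z) z + dsnd (fun z => k z * p₁ z) z
        = k z * (s z * q₂ z + t z * p₂ z)) :
    ∃ V : Fin 3 → ℝ × ℝ → ℝ, (∀ j, ContDiff ℝ ∞ (V j)) ∧ ∀ᶠ z in 𝓝 (0 : ℝ × ℝ),
      ∑ j, dfst (V j) z ^ 2 = p₁ z ^ 2 + p₂ z ^ 2 ∧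
      ∑ j, dfst (V j) z * dsnd (V j) z = p₁ z * q₁ z + p₂ z * q₂ z ∧
      ∑ j, dsnd (V j) z ^ 2 = q₁ z ^ 2 + q₂ z ^ 2 := by
  let S : Fin 4 → Fin 4 → ℝ × ℝ → ℝ :=
    ![![fun _ => 0, s, fun z => -(k z * p₂ z), fun _ => 0],
      ![fun z => -s z, fun _ => 0, fun z => k z * p₁ z, fun _ => 0],
      ![fun z => k z * p₂ z, fun z => -(k z * p₁ z), fun _ => 0, fun _ => 0],
      ![p₁, p₂, fun _ => 0, fun _ => 0]]
  let T : Fin 4 → Fin 4 → ℝ × ℝ → ℝ :=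
    ![![fun _ => 0, t, fun z => k z * q₂ z, fun _ => 0],
      ![fun z => -t z, fun _ => 0, fun z => -(k z * q₁ z), fun _ => 0],
      ![fun z => -(k z * q₂ z), fun z => k z * q₁ z, fun _ => 0, fun _ => 0],
      ![q₁, q₂, fun _ => 0, fun _ => 0]]
  have hS : ∀ i j, ContDiff ℝ ∞ (S i j) := by
    intro i j
    fin_cases i <;> fin_cases j <;> simp [S] <;> fun_prop
  have hT : ∀ i j, ContDiff ℝ ∞ (T i j) := by
    intro i j
    fin_cases i <;> fin_cases j <;> simp [T] <;> fun_prop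
  have hST : ∀ᶠ z in 𝓝 (0 : ℝ × ℝ), ∀ i k, dsnd (S i k) z + ∑ j, S i j z * T j k z
      = dfst (T i k) z + ∑ j, T i j z * S j k z := by
    filter_upwards [h] with z hz i j
    obtain ⟨h1, h2, h3, h4, h5⟩ := hz
    fin_cases i <;> fin_cases j <;>
      simp [S, T, Fin.sum_univ_four, dfst_const, dsnd_const, dfst_neg, dsnd_neg] <;> linarith
  choose w hw hw0 hwe using fun j : Fin 3 =>
    exists_frobenius hS hT hST (Pi.single j.castSucc 1)
  have hwe' : ∀ᶠ z in 𝓝 (0 : ℝ × ℝ), ∀ j i, dfst (w j i) z = ∑ l, S i l z * w j l z ∧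
      dsnd (w j i) z = ∑ l, T i l z * w j l z := eventually_all.2 hwe
  have hgram : ∀ᶠ z in 𝓝 (0 : ℝ × ℝ), ∀ j l : Fin 3,
      w j 0 z * w l 0 z + w j 1 z * w l 1 z + w j 2 z * w l 2 z = if j = l then 1 else 0 := by
    refine eventually_all.2 fun j => eventually_all.2 fun l => ?_
    have hm : ∀ i, ContDiff ℝ ∞ fun z => w j i z * w l i z := fun i => (hw j i).mul (hw l i)
    have hc := eventually_eq_apply_zero (((hm 0).add (hm 1)).add (hm 2)) (by
      filter_upwards [hwe'] with z hz
      have h1 := fun j i => (hz j i).1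
      have h2 := fun j i => (hz j i).2
      rw [dfst_add ((hm 0).add (hm 1)) (hm 2), dfst_add (hm 0) (hm 1),
        dsnd_add ((hm 0).add (hm 1)) (hm 2), dsnd_add (hm 0) (hm 1)]
      simp only [dfst_mul (hw j _) (hw l _), dsnd_mul (hw j _) (hw l _), h1, h2]
      simp only [Fin.sum_univ_four]
      constructor <;> simp [S, T] <;> ring)
    filter_upwards [hc] with z hz
    rw [hz]
    simp only [hw0]
    fin_cases j <;> fin_cases l <;> simp [Fin.ext_iff]
  refine ⟨fun j => w j 3, fun j => hw j 3, ?_⟩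
  filter_upwards [hwe', hgram] with z hz hg
  have hA : (Matrix.of fun i j : Fin 3 => w j i.castSucc z)ᵀ *
      (Matrix.of fun i j : Fin 3 => w j i.castSucc z) = 1 := by
    ext j l
    rw [Matrix.mul_apply, Fin.sum_univ_three, Matrix.one_apply]
    exact hg j l
  rw [mul_eq_one_comm] at hA
  have hrow : ∀ i l : Fin 3, ∑ j, w j i.castSucc z * w j l.castSucc z = if i = l then 1 else 0 :=
    fun i l => by
      have := congrFun (congrFun hA i) l
      rwa [Matrix.mul_apply, Matrix.one_apply] at this
  have h00 := hrow 0 0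
  have h01 := hrow 0 1
  have h11 := hrow 1 1
  have e1 : ∀ j, dfst (w j 3) z = p₁ z * w j 0 z + p₂ z * w j 1 z := fun j => by
    rw [(hz j 3).1]
    simp [S, Fin.sum_univ_four]
  have e2 : ∀ j, dsnd (w j 3) z = q₁ z * w j 0 z + q₂ z * w j 1 z := fun j => by
    rw [(hz j 3).2]
    simp [T, Fin.sum_univ_four]
  simp only [e1, e2, Fin.sum_univ_three] at *
  simp [-mul_eq_zero] at h00 h01 h11
  refine ⟨?_, ?_, ?_⟩
  · linear_combination p₁ z ^ 2 * h00 + 2 * p₁ z * p₂ z * h01 + p₂ z ^ 2 * h11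
  · linear_combination p₁ z * q₁ z * h00 + (p₁ z * q₂ z + p₂ z * q₁ z) * h01
      + p₂ z * q₂ z * h11
  · linear_combination q₁ z ^ 2 * h00 + 2 * q₁ z * q₂ z * h01 + q₂ z ^ 2 * h11

/-- A metric of negative curvature, given by its orthonormal coframe `a dx + b dy`, `c dy`, its
connection form `w₁ dx + w₂ dy` and the square root `k` of minus its curvature, is locally
induced by a surface in space, parametrized by asymptotic coordinates `X`. The functions `ai`,
`ci`, `ki` are the reciprocals of `a`, `c`, `k`. -/
theorem exists_surface_of_coframe {a b c ai ci k ki w₁ w₂ : ℝ × ℝ → ℝ} (ha : ContDiff ℝ ∞ a)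
    (hb : ContDiff ℝ ∞ b) (hc : ContDiff ℝ ∞ c) (hai : ContDiff ℝ ∞ ai) (hci : ContDiff ℝ ∞ ci)
    (hk : ContDiff ℝ ∞ k) (hki : ContDiff ℝ ∞ ki) (hw₁ : ContDiff ℝ ∞ w₁)
    (hw₂ : ContDiff ℝ ∞ w₂) {p : ℝ × ℝ}
    (h : ∀ᶠ z in 𝓝 p, a z * ai z = 1 ∧ c z * ci z = 1 ∧ k z * ki z = 1 ∧
      dfst b z - dsnd a z = w₁ z * c z ∧ dfst c z = w₂ z * a z - w₁ z * b z ∧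
      dfst w₂ z - dsnd w₁ z = k z ^ 2 * (a z * c z)) :
    ∃ (X : ℝ × ℝ → ℝ × ℝ) (V : Fin 3 → ℝ × ℝ → ℝ), ContDiff ℝ ∞ X ∧ (∀ j, ContDiff ℝ ∞ (V j)) ∧
      X 0 = p ∧ dfst X 0 = (1, 0) ∧ dsnd X 0 = (0, 1) ∧ ∀ᶠ z in 𝓝 (0 : ℝ × ℝ),
      ∑ j, dfst (V j) z ^ 2 = (a (X z) * (dfst X z).1 + b (X z) * (dfst X z).2) ^ 2
        + (c (X z) * (dfst X z).2) ^ 2 ∧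
      ∑ j, dfst (V j) z * dsnd (V j) z
        = (a (X z) * (dfst X z).1 + b (X z) * (dfst X z).2)
            * (a (X z) * (dsnd X z).1 + b (X z) * (dsnd X z).2)
          + (c (X z) * (dfst X z).2) * (c (X z) * (dsnd X z).2) ∧
      ∑ j, dsnd (V j) z ^ 2 = (a (X z) * (dsnd X z).1 + b (X z) * (dsnd X z).2) ^ 2
        + (c (X z) * (dsnd X z).2) ^ 2 := by
  have ha₁ := contDiff_dfst ha
  have ha₂ := contDiff_dsnd ha
  have hb₁ := contDiff_dfst hb
  have hb₂ := contDiff_dsnd hb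
  have hc₁ := contDiff_dfst hc
  have hc₂ := contDiff_dsnd hc
  have hk₁ := contDiff_dfst hk
  have hk₂ := contDiff_dsnd hk
  let D (f : ℝ × ℝ → ℝ) (x v : ℝ × ℝ) : ℝ := dfst f x * v.1 + dsnd f x * v.2
  let θ (x v : ℝ × ℝ) : ℝ := a x * v.1 + b x * v.2
  let φ (x v : ℝ × ℝ) : ℝ := w₁ x * v.1 + w₂ x * v.2
  let R₁ (w : (ℝ × ℝ) × (ℝ × ℝ) × (ℝ × ℝ)) : ℝ :=
    φ w.1 w.2.1 * (c w.1 * w.2.2.2) + φ w.1 w.2.2 * (c w.1 * w.2.1.2)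
      - (D k w.1 w.2.1 * θ w.1 w.2.2 + D k w.1 w.2.2 * θ w.1 w.2.1) * ki w.1
      - (D a w.1 w.2.1 * w.2.2.1 + D b w.1 w.2.1 * w.2.2.2
        + D a w.1 w.2.2 * w.2.1.1 + D b w.1 w.2.2 * w.2.1.2)
  let R₂ (w : (ℝ × ℝ) × (ℝ × ℝ) × (ℝ × ℝ)) : ℝ :=
    -(φ w.1 w.2.1 * θ w.1 w.2.2 + φ w.1 w.2.2 * θ w.1 w.2.1)
      - (D k w.1 w.2.1 * (c w.1 * w.2.2.2) + D k w.1 w.2.2 * (c w.1 * w.2.1.2)) * ki w.1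
      - (D c w.1 w.2.1 * w.2.2.2 + D c w.1 w.2.2 * w.2.1.2)
  have hR₁ : ContDiff ℝ ∞ R₁ := by fun_prop
  have hR₂ : ContDiff ℝ ∞ R₂ := by fun_prop
  obtain ⟨X, hX, hX0, hXa, hXb, hwave⟩ := exists_semilinear_wave
    (B := fun w => ((R₁ w / 2 - b w.1 * (R₂ w / 2 * ci w.1)) * ai w.1, R₂ w / 2 * ci w.1))
    (by fun_prop) p
  let x (z : ℝ × ℝ) : ℝ := (X z).1
  let y (z : ℝ × ℝ) : ℝ := (X z).2
  have hx : ContDiff ℝ ∞ x := by fun_prop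
  have hy : ContDiff ℝ ∞ y := by fun_prop
  have hxa : ∀ z, (dfst X z).1 = dfst x z := fun z =>
    ((ContinuousLinearMap.fst ℝ ℝ ℝ).dfst_comp hX z).symm
  have hxb : ∀ z, (dsnd X z).1 = dsnd x z := fun z =>
    ((ContinuousLinearMap.fst ℝ ℝ ℝ).dsnd_comp hX z).symm
  have hya : ∀ z, (dfst X z).2 = dfst y z := fun z =>
    ((ContinuousLinearMap.snd ℝ ℝ ℝ).dfst_comp hX z).symm
  have hyb : ∀ z, (dsnd X z).2 = dsnd y z := fun z =>
    ((ContinuousLinearMap.snd ℝ ℝ ℝ).dsnd_comp hX z).symm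
  have hxab : ∀ z, (dfst (dsnd X) z).1 = dfst (dsnd x) z := fun z =>
    ((ContinuousLinearMap.fst ℝ ℝ ℝ).dfst_comp (contDiff_dsnd hX) z).symm.trans
      (congrArg (fun f => dfst f z) (funext hxb))
  have hyab : ∀ z, (dfst (dsnd X) z).2 = dfst (dsnd y) z := fun z =>
    ((ContinuousLinearMap.snd ℝ ℝ ℝ).dfst_comp (contDiff_dsnd hX) z).symm.trans
      (congrArg (fun f => dfst f z) (funext hyb))
  have hcomp : ∀ {f : ℝ × ℝ → ℝ}, ContDiff ℝ ∞ f → ContDiff ℝ ∞ fun z => f (x z, y z) :=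
    fun hf => hf.comp (hx.prodMk hy)
  have hx₁ := contDiff_dfst hx
  have hx₂ := contDiff_dsnd hx
  have hy₁ := contDiff_dfst hy
  have hy₂ := contDiff_dsnd hy
  have hf₁ : ∀ {f g : ℝ × ℝ → ℝ}, ContDiff ℝ ∞ f → ContDiff ℝ ∞ g → ∀ z,
      dfst (fun z => f (x z, y z) * g z) z = (dfst f (x z, y z) * dfst x z
        + dsnd f (x z, y z) * dfst y z) * g z + f (x z, y z) * dfst g z := fun hf hg z => by
    rw [dfst_mul (hcomp hf) hg, dfst_comp_prodMk hf hx hy]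
  have hf₂ : ∀ {f g : ℝ × ℝ → ℝ}, ContDiff ℝ ∞ f → ContDiff ℝ ∞ g → ∀ z,
      dsnd (fun z => f (x z, y z) * g z) z = (dfst f (x z, y z) * dsnd x z
        + dsnd f (x z, y z) * dsnd y z) * g z + f (x z, y z) * dsnd g z := fun hf hg z => by
    rw [dsnd_mul (hcomp hf) hg, dsnd_comp_prodMk hf hx hy]
  have hlin₁ : ∀ {f g l m : ℝ × ℝ → ℝ}, ContDiff ℝ ∞ f → ContDiff ℝ ∞ g → ContDiff ℝ ∞ l →
      ContDiff ℝ ∞ m → ∀ z, dfst (fun z => f (x z, y z) * l z + g (x z, y z) * m z) z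
        = dfst (fun z => f (x z, y z) * l z) z + dfst (fun z => g (x z, y z) * m z) z :=
    fun hf hg hl hm z => dfst_add ((hcomp hf).mul hl) ((hcomp hg).mul hm) z
  have hlin₂ : ∀ {f g l m : ℝ × ℝ → ℝ}, ContDiff ℝ ∞ f → ContDiff ℝ ∞ g → ContDiff ℝ ∞ l →
      ContDiff ℝ ∞ m → ∀ z, dsnd (fun z => f (x z, y z) * l z + g (x z, y z) * m z) z
        = dsnd (fun z => f (x z, y z) * l z) z + dsnd (fun z => g (x z, y z) * m z) z :=
    fun hf hg hl hm z => dsnd_add ((hcomp hf).mul hl) ((hcomp hg).mul hm) z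
  have hsmooth : ∀ {f g l m : ℝ × ℝ → ℝ}, ContDiff ℝ ∞ f → ContDiff ℝ ∞ g → ContDiff ℝ ∞ l →
      ContDiff ℝ ∞ m → ContDiff ℝ ∞ fun z => f (x z, y z) * l z + g (x z, y z) * m z :=
    fun hf hg hl hm => ((hcomp hf).mul hl).add ((hcomp hg).mul hm)
  have hXt : Tendsto X (𝓝 0) (𝓝 p) := by
    have := hX.continuous.tendsto 0
    rwa [hX0] at this
  obtain ⟨V, hV, hVe⟩ := exists_surface_of_gauss_codazzi (k := fun z => k (x z, y z))
    (hsmooth ha hb hx₁ hy₁) ((hcomp hc).mul hy₁) (hsmooth ha hb hx₂ hy₂) ((hcomp hc).mul hy₂)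
    (hsmooth hw₁ hw₂ hx₁ hy₁) (hsmooth hw₁ hw₂ hx₂ hy₂) (hcomp hk) (by
      filter_upwards [hwave, hXt.eventually h] with z hz hz'
      obtain ⟨haa, hcc, hkk, e1, e2, e3⟩ := hz'
      have hB₁ := (hxab z).symm.trans (congrArg Prod.fst hz)
      have hB₂ := (hyab z).symm.trans (congrArg Prod.snd hz)
      obtain ⟨r₁, hr₁⟩ : ∃ r, r = R₁ (X z, dfst X z, dsnd X z) := ⟨_, rfl⟩
      obtain ⟨r₂, hr₂⟩ : ∃ r, r = R₂ (X z, dfst X z, dsnd X z) := ⟨_, rfl⟩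
      simp only [← hr₁, ← hr₂] at hB₁ hB₂
      simp only [R₁, R₂, D, θ, φ, hxa, hxb, hya, hyb] at hr₁ hr₂
      rw [hlin₁ ha hb hx₂ hy₂, hlin₂ ha hb hx₁ hy₁, hlin₁ hw₁ hw₂ hx₂ hy₂,
        hlin₂ hw₁ hw₂ hx₁ hy₁, hf₁ hk ((hcomp hc).mul hy₂), hf₂ hk ((hcomp hc).mul hy₁),
        hf₁ hk (hsmooth ha hb hx₂ hy₂), hf₂ hk (hsmooth ha hb hx₁ hy₁),
        hlin₁ ha hb hx₂ hy₂, hlin₂ ha hb hx₁ hy₁]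
      simp only [hf₁ ha hx₂, hf₁ hb hy₂, hf₁ hw₁ hx₂, hf₁ hw₂ hy₂, hf₁ hc hy₂, hf₂ ha hx₁,
        hf₂ hb hy₁, hf₂ hw₁ hx₁, hf₂ hw₂ hy₁, hf₂ hc hy₁, ← dfst_dsnd_comm hx,
        ← dfst_dsnd_comm hy]
      change a (x z, y z) * ai (x z, y z) = 1 at haa
      change c (x z, y z) * ci (x z, y z) = 1 at hcc
      change k (x z, y z) * ki (x z, y z) = 1 at hkk
      change dfst b (x z, y z) - dsnd a (x z, y z) = w₁ (x z, y z) * c (x z, y z) at e1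
      change dfst c (x z, y z) = w₂ (x z, y z) * a (x z, y z) - w₁ (x z, y z) * b (x z, y z) at e2
      change dfst w₂ (x z, y z) - dsnd w₁ (x z, y z)
        = k (x z, y z) ^ 2 * (a (x z, y z) * c (x z, y z)) at e3
      rw [show X z = (x z, y z) from rfl] at hr₁ hr₂ hB₁ hB₂
      generalize (x z, y z) = m at *
      refine ⟨?_, ?_, ?_, ?_, ?_⟩
      · linear_combination (dfst x z * dsnd y z - dsnd x z * dfst y z) * e1
      · linear_combination (dfst x z * dsnd y z - dsnd x z * dfst y z) * e2
      · linear_combination (dfst x z * dsnd y z - dsnd x z * dfst y z) * e3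
      · linear_combination 2 * k m * c m * hB₂ + k m * r₂ * hcc + k m * hr₂
          - ((dfst k m * dfst x z + dsnd k m * dfst y z) * (c m * dsnd y z)
            + (dfst k m * dsnd x z + dsnd k m * dsnd y z) * (c m * dfst y z)) * hkk
      · linear_combination 2 * k m * a m * hB₁ + 2 * k m * b m * hB₂ + k m * hr₁
          + 2 * k m * (r₁ / 2 - b m * (r₂ / 2 * ci m)) * haa
          - ((dfst k m * dfst x z + dsnd k m * dfst y z) * (a m * dsnd x z + b m * dsnd y z)
            + (dfst k m * dsnd x z + dsnd k m * dsnd y z)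
              * (a m * dfst x z + b m * dfst y z)) * hkk)
  refine ⟨X, V, hX, hV, hX0, hXa, hXb, ?_⟩
  filter_upwards [hVe] with z hz
  simp only [hxa, hxb, hya, hyb]
  exact hz

theorem exists_isometric_of_coframe {a b c ai ci k ki w₁ w₂ : ℝ × ℝ → ℝ} (ha : ContDiff ℝ ∞ a)
    (hb : ContDiff ℝ ∞ b) (hc : ContDiff ℝ ∞ c) (hai : ContDiff ℝ ∞ ai) (hci : ContDiff ℝ ∞ ci)
    (hk : ContDiff ℝ ∞ k) (hki : ContDiff ℝ ∞ ki) (hw₁ : ContDiff ℝ ∞ w₁)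
    (hw₂ : ContDiff ℝ ∞ w₂) {p : ℝ × ℝ}
    (h : ∀ᶠ z in 𝓝 p, a z * ai z = 1 ∧ c z * ci z = 1 ∧ k z * ki z = 1 ∧
      dfst b z - dsnd a z = w₁ z * c z ∧ dfst c z = w₂ z * a z - w₁ z * b z ∧
      dfst w₂ z - dsnd w₁ z = k z ^ 2 * (a z * c z)) :
    ∃ v : Fin 3 → ℝ × ℝ → ℝ, (∀ j, ContDiff ℝ ∞ (v j)) ∧ ∀ᶠ z in 𝓝 p,
      ∑ j, dfst (v j) z ^ 2 = a z ^ 2 ∧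
      ∑ j, dfst (v j) z * dsnd (v j) z = a z * b z ∧
      ∑ j, dsnd (v j) z ^ 2 = b z ^ 2 + c z ^ 2 := by
  obtain ⟨X, V, hX, hV, hX0, hXa, hXb, hVe⟩ :=
    exists_surface_of_coframe ha hb hc hai hci hk hki hw₁ hw₂ h
  have hX' : HasFDerivAt X (ContinuousLinearEquiv.refl ℝ (ℝ × ℝ) : ℝ × ℝ →L[ℝ] ℝ × ℝ) 0 := by
    have h := (hX.differentiable (by simp) 0).hasFDerivAt
    have e : fderiv ℝ X 0 = (ContinuousLinearEquiv.refl ℝ (ℝ × ℝ) : ℝ × ℝ →L[ℝ] ℝ × ℝ) := by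
      change fderiv ℝ X 0 (1, 0) = _ at hXa
      change fderiv ℝ X 0 (0, 1) = _ at hXb
      ext <;> simp [hXa, hXb]
    rwa [e] at h
  obtain ⟨φ, hφ0, hφ, -⟩ := exists_smooth_localInverse hX hX'
  rw [hX0] at hφ0 hφ
  obtain ⟨Y, hY, hYe⟩ := exists_contDiff_eventuallyEq (hφ.mono fun y hy => hy.1)
  have hY0 : Y p = 0 := hYe.self_of_nhds.trans hφ0
  have hYt : Tendsto Y (𝓝 p) (𝓝 0) := by
    have := hY.continuous.tendsto p
    rwa [hY0] at this
  have hXY : ∀ᶠ m in 𝓝 p, X (Y m) = m := by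
    filter_upwards [hφ, hYe] with m h1 h2
    rw [h2, h1.2]
  let y₁ (m : ℝ × ℝ) : ℝ := (Y m).1
  let y₂ (m : ℝ × ℝ) : ℝ := (Y m).2
  have hy₁ : ContDiff ℝ ∞ y₁ := by fun_prop
  have hy₂ : ContDiff ℝ ∞ y₂ := by fun_prop
  have hx : ∀ z, dfst (fun z => (X z).1) z = (dfst X z).1 ∧ dsnd (fun z => (X z).1) z
      = (dsnd X z).1 ∧ dfst (fun z => (X z).2) z = (dfst X z).2 ∧
        dsnd (fun z => (X z).2) z = (dsnd X z).2 := fun z =>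
    ⟨(ContinuousLinearMap.fst ℝ ℝ ℝ).dfst_comp hX z, (ContinuousLinearMap.fst ℝ ℝ ℝ).dsnd_comp hX z,
      (ContinuousLinearMap.snd ℝ ℝ ℝ).dfst_comp hX z, (ContinuousLinearMap.snd ℝ ℝ ℝ).dsnd_comp hX z⟩
  refine ⟨fun j m => V j (y₁ m, y₂ m), fun j => (hV j).comp (hy₁.prodMk hy₂), ?_⟩
  filter_upwards [hYt.eventually hVe, hXY.eventually_nhds] with m hm hm'
  obtain ⟨g1, g2, g3⟩ := hm
  rw [hm'.self_of_nhds] at g1 g2 g3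
  have hfst : (fun m => (fun z => (X z).1) (y₁ m, y₂ m)) =ᶠ[𝓝 m] fun m => m.1 :=
    hm'.mono fun m h => congrArg Prod.fst h
  have hsnd : (fun m => (fun z => (X z).2) (y₁ m, y₂ m)) =ᶠ[𝓝 m] fun m => m.2 :=
    hm'.mono fun m h => congrArg Prod.snd h
  have e11 := hfst.dfst.self_of_nhds
  have e12 := hfst.dsnd.self_of_nhds
  have e21 := hsnd.dfst.self_of_nhds
  have e22 := hsnd.dsnd.self_of_nhds
  have c11 : dfst (fun m : ℝ × ℝ => m.1) m = 1 := by simp [dfst, fderiv_fst]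
  have c12 : dsnd (fun m : ℝ × ℝ => m.1) m = 0 := by simp [dsnd, fderiv_fst]
  have c21 : dfst (fun m : ℝ × ℝ => m.2) m = 0 := by simp [dfst, fderiv_snd]
  have c22 : dsnd (fun m : ℝ × ℝ => m.2) m = 1 := by simp [dsnd, fderiv_snd]
  rw [dfst_comp_prodMk hX.fst hy₁ hy₂, (hx _).1, (hx _).2.1, c11] at e11
  rw [dsnd_comp_prodMk hX.fst hy₁ hy₂, (hx _).1, (hx _).2.1, c12] at e12
  rw [dfst_comp_prodMk hX.snd hy₁ hy₂, (hx _).2.2.1, (hx _).2.2.2, c21] at e21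
  rw [dsnd_comp_prodMk hX.snd hy₁ hy₂, (hx _).2.2.1, (hx _).2.2.2, c22] at e22
  simp only [dfst_comp_prodMk (hV _) hy₁ hy₂, dsnd_comp_prodMk (hV _) hy₁ hy₂]
  simp only [Fin.sum_univ_three, show (y₁ m, y₂ m) = Y m from rfl] at *
  generalize Y m = z at *
  generalize dfst X z = P at *
  generalize dsnd X z = Q at *
  have d1 : (a m * P.1 + b m * P.2) * dfst y₁ m + (a m * Q.1 + b m * Q.2) * dfst y₂ m = a m := by
    linear_combination a m * e11 + b m * e21
  have d2 : (a m * P.1 + b m * P.2) * dsnd y₁ m + (a m * Q.1 + b m * Q.2) * dsnd y₂ m = b m := by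
    linear_combination a m * e12 + b m * e22
  have d3 : c m * P.2 * dfst y₁ m + c m * Q.2 * dfst y₂ m = 0 := by
    linear_combination c m * e21
  have d4 : c m * P.2 * dsnd y₁ m + c m * Q.2 * dsnd y₂ m = c m := by
    linear_combination c m * e22
  generalize a m * P.1 + b m * P.2 = p₁ at *
  generalize a m * Q.1 + b m * Q.2 = q₁ at *
  generalize c m * P.2 = p₂ at *
  generalize c m * Q.2 = q₂ at *
  refine ⟨?_, ?_, ?_⟩
  · rw [← d1]
    linear_combination dfst y₁ m ^ 2 * g1 + 2 * dfst y₁ m * dfst y₂ m * g2 + dfst y₂ m ^ 2 * g3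
      + (p₂ * dfst y₁ m + q₂ * dfst y₂ m) * d3
  · rw [← d1, ← d2]
    linear_combination dfst y₁ m * dsnd y₁ m * g1 + (dfst y₁ m * dsnd y₂ m
      + dfst y₂ m * dsnd y₁ m) * g2 + dfst y₂ m * dsnd y₂ m * g3
      + (p₂ * dsnd y₁ m + q₂ * dsnd y₂ m) * d3
  · rw [← d2, ← d4]
    linear_combination dsnd y₁ m ^ 2 * g1 + 2 * dsnd y₁ m * dsnd y₂ m * g2 + dsnd y₂ m ^ 2 * g3

/-! ### Coframes and their curvature -/

theorem exists_smooth_sqrt {f : ℝ × ℝ → ℝ} (hf : ContDiff ℝ ∞ f) {p : ℝ × ℝ} (hp : 0 < f p) :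
    ∃ r ri : ℝ × ℝ → ℝ, ContDiff ℝ ∞ r ∧ ContDiff ℝ ∞ ri ∧
      ∀ᶠ z in 𝓝 p, 0 < r z ∧ r z * ri z = 1 ∧ r z ^ 2 = f z := by
  have hpos : ∀ᶠ z in 𝓝 p, 0 < f z := hf.continuous.continuousAt.eventually (lt_mem_nhds hp)
  have hs : ∀ᶠ z in 𝓝 p, ContDiffAt ℝ ∞ (fun z => √(f z)) z :=
    hpos.mono fun z hz => hf.contDiffAt.sqrt hz.ne'
  obtain ⟨r, hr, hre⟩ := exists_contDiff_eventuallyEq hs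
  obtain ⟨ri, hri, hrie⟩ := exists_contDiff_eventuallyEq
    (hpos.mp (hs.mono fun z hz hz' => hz.inv (Real.sqrt_pos.2 hz').ne'))
  refine ⟨r, ri, hr, hri, ?_⟩
  filter_upwards [hpos, hre, hrie] with z h1 h2 h3
  rw [h2, h3]
  exact ⟨Real.sqrt_pos.2 h1, mul_inv_cancel₀ (Real.sqrt_pos.2 h1).ne', Real.sq_sqrt h1.le⟩

theorem exists_coframe {E F G : ℝ × ℝ → ℝ} (hE : ContDiff ℝ ∞ E) (hF : ContDiff ℝ ∞ F)
    (hG : ContDiff ℝ ∞ G) {p : ℝ × ℝ} (hp : 0 < E p) (hD : 0 < E p * G p - F p ^ 2) :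
    ∃ a b c ai ci : ℝ × ℝ → ℝ, ContDiff ℝ ∞ a ∧ ContDiff ℝ ∞ b ∧ ContDiff ℝ ∞ c ∧
      ContDiff ℝ ∞ ai ∧ ContDiff ℝ ∞ ci ∧ ∀ᶠ z in 𝓝 p, 0 < a z ∧ 0 < c z ∧ a z * ai z = 1 ∧
        c z * ci z = 1 ∧ a z * a z = E z ∧ a z * b z = F z ∧ b z * b z + c z * c z = G z := by
  obtain ⟨a, ai, ha, hai, hae⟩ := exists_smooth_sqrt hE hp
  have hpos : 0 < G p - (F p * ai p) ^ 2 := by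
    obtain ⟨h1, h2, h3⟩ := hae.self_of_nhds
    have : E p * (G p - (F p * ai p) ^ 2) = E p * G p - F p ^ 2 := by
      rw [← h3]
      linear_combination (-(F p) ^ 2 * (a p * ai p + 1)) * h2
    exact (mul_pos_iff_of_pos_left hp).1 (this ▸ hD)
  obtain ⟨c, ci, hc, hci, hce⟩ := exists_smooth_sqrt
    (f := fun z => G z - (F z * ai z) ^ 2) (by fun_prop) hpos
  refine ⟨a, fun z => F z * ai z, c, ai, ci, ha, by fun_prop, hc, hai, hci, ?_⟩
  filter_upwards [hae, hce] with z ⟨h1, h2, h3⟩ ⟨h4, h5, h6⟩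
  refine ⟨h1, h4, h2, h5, ?_, ?_, ?_⟩
  · linarith
  · linear_combination F z * h2
  · linarith

theorem dfst_dfst_mul {f g : ℝ × ℝ → ℝ} (hf : ContDiff ℝ ∞ f) (hg : ContDiff ℝ ∞ g)
    (z : ℝ × ℝ) : dfst (dfst fun z => f z * g z) z
      = dfst (dfst f) z * g z + 2 * (dfst f z * dfst g z) + f z * dfst (dfst g) z := by
  have hf' := contDiff_dfst hf
  have hg' := contDiff_dfst hg
  rw [funext (dfst_mul hf hg), dfst_add (hf'.mul hg) (hf.mul hg'), dfst_mul hf' hg,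
    dfst_mul hf hg']
  ring

theorem dsnd_dsnd_mul {f g : ℝ × ℝ → ℝ} (hf : ContDiff ℝ ∞ f) (hg : ContDiff ℝ ∞ g)
    (z : ℝ × ℝ) : dsnd (dsnd fun z => f z * g z) z
      = dsnd (dsnd f) z * g z + 2 * (dsnd f z * dsnd g z) + f z * dsnd (dsnd g) z := by
  have hf' := contDiff_dsnd hf
  have hg' := contDiff_dsnd hg
  rw [funext (dsnd_mul hf hg), dsnd_add (hf'.mul hg) (hf.mul hg'), dsnd_mul hf' hg,
    dsnd_mul hf hg']
  ring

theorem dsnd_dfst_mul {f g : ℝ × ℝ → ℝ} (hf : ContDiff ℝ ∞ f) (hg : ContDiff ℝ ∞ g)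
    (z : ℝ × ℝ) : dsnd (dfst fun z => f z * g z) z
      = dsnd (dfst f) z * g z + dfst f z * dsnd g z + dsnd f z * dfst g z
        + f z * dsnd (dfst g) z := by
  have hf' := contDiff_dfst hf
  have hg' := contDiff_dfst hg
  rw [funext (dfst_mul hf hg), dsnd_add (hf'.mul hg) (hf.mul hg'), dsnd_mul hf' hg,
    dsnd_mul hf hg']
  ring

/-- The part of the Gauss curvature formula that depends only on the first derivatives of the
coframe `a dx + b dy`, `c dy`. -/
def coframeQuadratic (a b c a₁ a₂ b₁ b₂ c₁ c₂ : ℝ) : ℝ :=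
  a₁ * b₂ + a₂ * b₁ - b₁ ^ 2 - c₁ ^ 2 - a₂ ^ 2
    + (b₁ - a₂) / c * (c * b₁ - b * c₁ + a * c₂) - c * ((c₁ + (b₁ - a₂) / c * b) / a) * a₁

theorem curvature_coframe {E F G a b c w₁ w₂ : ℝ × ℝ → ℝ} (ha : ContDiff ℝ ∞ a)
    (hb : ContDiff ℝ ∞ b) (hc : ContDiff ℝ ∞ c) (hw₁ : ContDiff ℝ ∞ w₁) (hw₂ : ContDiff ℝ ∞ w₂)
    {p : ℝ × ℝ} (h : ∀ᶠ z in 𝓝 p, 0 < a z ∧ 0 < c z ∧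
      a z * a z = E z ∧ a z * b z = F z ∧ b z * b z + c z * c z = G z)
    (h₁ : ∀ᶠ z in 𝓝 p, w₁ z * c z = dfst b z + -dsnd a z)
    (h₂ : ∀ᶠ z in 𝓝 p, w₂ z * a z = dfst c z + w₁ z * b z) :
    a p * c p * (dfst w₂ p - dsnd w₁ p) = dfst (dfst G) p / 2 - dsnd (dfst F) p
      + dsnd (dsnd E) p / 2 + coframeQuadratic (a p) (b p) (c p) (dfst a p) (dsnd a p) (dfst b p)
        (dsnd b p) (dfst c p) (dsnd c p) := by
  have hE : E =ᶠ[𝓝 p] fun z => a z * a z := h.mono fun z hz => hz.2.2.1.symm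
  have hF : F =ᶠ[𝓝 p] fun z => a z * b z := h.mono fun z hz => hz.2.2.2.1.symm
  have hG : G =ᶠ[𝓝 p] fun z => b z * b z + c z * c z := h.mono fun z hz => hz.2.2.2.2.symm
  have hbb := hb.mul hb
  have hcc := hc.mul hc
  rw [hE.dsnd.dsnd.self_of_nhds, hF.dfst.dsnd.self_of_nhds, hG.dfst.dfst.self_of_nhds,
    funext (dfst_add hbb hcc), dfst_add (contDiff_dfst hbb) (contDiff_dfst hcc),
    dfst_dfst_mul hb hb, dfst_dfst_mul hc hc, dsnd_dfst_mul ha hb, dsnd_dsnd_mul ha ha]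
  have e₁ := (EventuallyEq.dfst h₁).self_of_nhds
  have e₂ := (EventuallyEq.dsnd h₁).self_of_nhds
  have e₃ := (EventuallyEq.dfst h₂).self_of_nhds
  rw [dfst_mul hw₁ hc, dfst_add (contDiff_dfst hb) (contDiff_dsnd ha).neg, dfst_neg,
    dfst_dsnd_comm ha] at e₁
  rw [dsnd_mul hw₁ hc, dsnd_add (contDiff_dfst hb) (contDiff_dsnd ha).neg, dsnd_neg] at e₂
  rw [dfst_mul hw₂ ha, dfst_add (contDiff_dfst hc) (hw₁.mul hb), dfst_mul hw₁ hb] at e₃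
  obtain ⟨hap, hcp, -⟩ := h.self_of_nhds
  have f₁ : (dfst b p - dsnd a p) / c p = w₁ p := by
    rw [div_eq_iff hcp.ne', h₁.self_of_nhds]
    ring
  have f₂ : (dfst c p + w₁ p * b p) / a p = w₂ p := by
    rw [div_eq_iff hap.ne', h₂.self_of_nhds]
  rw [coframeQuadratic, f₁, f₂]
  linear_combination c p * e₃ + b p * e₁ - a p * e₂

/-- The first-order part of the curvature depends only on the first-order jet of the metric. -/
theorem coframeQuadratic_congr {E F G E' F' G' a b c a' b' c' : ℝ × ℝ → ℝ} (ha : ContDiff ℝ ∞ a)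
    (hb : ContDiff ℝ ∞ b) (hc : ContDiff ℝ ∞ c) (ha' : ContDiff ℝ ∞ a') (hb' : ContDiff ℝ ∞ b')
    (hc' : ContDiff ℝ ∞ c') {p : ℝ × ℝ} (h : ∀ᶠ z in 𝓝 p, 0 < a z ∧ 0 < c z ∧
      a z * a z = E z ∧ a z * b z = F z ∧ b z * b z + c z * c z = G z)
    (h' : ∀ᶠ z in 𝓝 p, 0 < a' z ∧ 0 < c' z ∧
      a' z * a' z = E' z ∧ a' z * b' z = F' z ∧ b' z * b' z + c' z * c' z = G' z)
    (hE : E p = E' p) (hF : F p = F' p) (hG : G p = G' p)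
    (hE₁ : dfst E p = dfst E' p) (hF₁ : dfst F p = dfst F' p) (hG₁ : dfst G p = dfst G' p)
    (hE₂ : dsnd E p = dsnd E' p) (hF₂ : dsnd F p = dsnd F' p) (hG₂ : dsnd G p = dsnd G' p) :
    coframeQuadratic (a p) (b p) (c p) (dfst a p) (dsnd a p) (dfst b p) (dsnd b p) (dfst c p)
        (dsnd c p)
      = coframeQuadratic (a' p) (b' p) (c' p) (dfst a' p) (dsnd a' p) (dfst b' p) (dsnd b' p)
        (dfst c' p) (dsnd c' p) := by
  have key : ∀ {E F G a b c : ℝ × ℝ → ℝ}, ContDiff ℝ ∞ a → ContDiff ℝ ∞ b → ContDiff ℝ ∞ c →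
      (∀ᶠ z in 𝓝 p, 0 < a z ∧ 0 < c z ∧
        a z * a z = E z ∧ a z * b z = F z ∧ b z * b z + c z * c z = G z) →
      (dfst E p = 2 * (a p * dfst a p) ∧ dfst F p = dfst a p * b p + a p * dfst b p ∧
        dfst G p = 2 * (b p * dfst b p) + 2 * (c p * dfst c p)) ∧
      (dsnd E p = 2 * (a p * dsnd a p) ∧ dsnd F p = dsnd a p * b p + a p * dsnd b p ∧
        dsnd G p = 2 * (b p * dsnd b p) + 2 * (c p * dsnd c p)) := by
    intro E F G a b c ha hb hc h
    have hE : E =ᶠ[𝓝 p] fun z => a z * a z := h.mono fun z hz => hz.2.2.1.symm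
    have hF : F =ᶠ[𝓝 p] fun z => a z * b z := h.mono fun z hz => hz.2.2.2.1.symm
    have hG : G =ᶠ[𝓝 p] fun z => b z * b z + c z * c z := h.mono fun z hz => hz.2.2.2.2.symm
    rw [hE.dfst.self_of_nhds, hF.dfst.self_of_nhds, hG.dfst.self_of_nhds, hE.dsnd.self_of_nhds,
      hF.dsnd.self_of_nhds, hG.dsnd.self_of_nhds, dfst_add (hb.mul hb) (hc.mul hc),
      dsnd_add (hb.mul hb) (hc.mul hc)]
    simp only [dfst_mul ha ha, dfst_mul ha hb, dfst_mul hb hb, dfst_mul hc hc, dsnd_mul ha ha,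
      dsnd_mul ha hb, dsnd_mul hb hb, dsnd_mul hc hc]
    exact ⟨⟨by ring, trivial, by ring⟩, by ring, trivial, by ring⟩
  obtain ⟨⟨k1, k2, k3⟩, k4, k5, k6⟩ := key ha hb hc h
  obtain ⟨⟨l1, l2, l3⟩, l4, l5, l6⟩ := key ha' hb' hc' h'
  obtain ⟨pa, pc, m1, m2, m3⟩ := h.self_of_nhds
  obtain ⟨pa', pc', n1, n2, n3⟩ := h'.self_of_nhds
  have ea : a' p = a p := (mul_self_inj pa'.le pa.le).1 (by rw [m1, n1, hE])
  have eb : b' p = b p := mul_left_cancel₀ pa.ne' (by rw [m2, hF, ← n2, ea])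
  have ec : c' p = c p := (mul_self_inj pc'.le pc.le).1 (by
    have : b p * b p + c p * c p = b' p * b' p + c' p * c' p := by rw [m3, n3, hG]
    rw [eb] at this
    linarith)
  rw [ea] at l1 l2 l4 l5
  rw [eb] at l2 l3 l5 l6
  rw [ec] at l3 l6
  have ea₁ : dfst a' p = dfst a p := mul_left_cancel₀ pa.ne' (by linarith)
  have ea₂ : dsnd a' p = dsnd a p := mul_left_cancel₀ pa.ne' (by linarith)
  rw [ea₁] at l2
  rw [ea₂] at l5
  have eb₁ : dfst b' p = dfst b p := mul_left_cancel₀ pa.ne' (by linarith)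
  have eb₂ : dsnd b' p = dsnd b p := mul_left_cancel₀ pa.ne' (by linarith)
  rw [eb₁] at l3
  rw [eb₂] at l6
  have ec₁ : dfst c' p = dfst c p := mul_left_cancel₀ pc.ne' (by linarith)
  have ec₂ : dsnd c' p = dsnd c p := mul_left_cancel₀ pc.ne' (by linarith)
  rw [ea, eb, ec, ea₁, ea₂, eb₁, eb₂, ec₁, ec₂]

theorem exists_isometric_coords {E F G : ℝ × ℝ → ℝ} (hE : ContDiff ℝ ∞ E) (hF : ContDiff ℝ ∞ F)
    (hG : ContDiff ℝ ∞ G) {p : ℝ × ℝ} (hp : 0 < E p) (hD : 0 < E p * G p - F p ^ 2) :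
    ∃ u : Fin 4 → ℝ × ℝ → ℝ, (∀ j, ContDiff ℝ ∞ (u j)) ∧ ∀ᶠ z in 𝓝 p,
      ∑ j, dfst (u j) z ^ 2 = E z ∧ ∑ j, dfst (u j) z * dsnd (u j) z = F z ∧
      ∑ j, dsnd (u j) z ^ 2 = G z := by
  obtain ⟨a, b, c, _, _, ha, hb, hc, -, -, h⟩ := exists_coframe hE hF hG hp hD
  have h := h.mono fun z hz => (⟨hz.1, hz.2.1, hz.2.2.2.2⟩ : 0 < a z ∧ 0 < c z ∧
    a z * a z = E z ∧ a z * b z = F z ∧ b z * b z + c z * c z = G z)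
  obtain ⟨t, ht⟩ : ∃ t : ℝ, 0 < dfst (dfst G) p / 2 - dsnd (dfst F) p + dsnd (dsnd E) p / 2
      + coframeQuadratic (a p) (b p) (c p) (dfst a p) (dsnd a p) (dfst b p) (dsnd b p) (dfst c p)
        (dsnd c p) + t * t := by
    generalize dfst (dfst G) p / 2 - dsnd (dfst F) p + dsnd (dsnd E) p / 2
      + coframeQuadratic (a p) (b p) (c p) (dfst a p) (dsnd a p) (dfst b p) (dsnd b p) (dfst c p)
        (dsnd c p) = K
    exact ⟨|K| + 1, by nlinarith [abs_nonneg K, neg_abs_le K]⟩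
  let x (z : ℝ × ℝ) : ℝ := t * (z.1 - p.1)
  let y (z : ℝ × ℝ) : ℝ := t * (z.2 - p.2)
  let f (z : ℝ × ℝ) : ℝ := t * ((z.1 - p.1) ^ 2 / 2 + (z.2 - p.2) ^ 2 / 2)
  have hx : ContDiff ℝ ∞ x := by fun_prop
  have hy : ContDiff ℝ ∞ y := by fun_prop
  have hf : ContDiff ℝ ∞ f := by fun_prop
  have hline : ∀ q s : ℝ, HasDerivAt (fun s => s - q) 1 s := fun q s =>
    (hasDerivAt_id s).sub_const q
  have hx₁ : dfst x = fun _ => t := funext fun z =>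
    (hasDerivAt_dfst hx z.1 z.2).unique (by simpa using (hline p.1 z.1).const_mul t)
  have hx₂ : dsnd x = fun _ => 0 := funext fun z =>
    (hasDerivAt_dsnd hx z.1 z.2).unique (hasDerivAt_const _ (t * (z.1 - p.1)))
  have hy₁ : dfst y = fun _ => 0 := funext fun z =>
    (hasDerivAt_dfst hy z.1 z.2).unique (hasDerivAt_const _ (t * (z.2 - p.2)))
  have hy₂ : dsnd y = fun _ => t := funext fun z =>
    (hasDerivAt_dsnd hy z.1 z.2).unique (by simpa using (hline p.2 z.2).const_mul t)
  have hf₁ : dfst f = x := funext fun z =>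
    (hasDerivAt_dfst hf z.1 z.2).unique (by
      simpa using ((((hline p.1 z.1).pow 2).div_const 2).add_const
        ((z.2 - p.2) ^ 2 / 2)).const_mul t)
  have hf₂ : dsnd f = y := funext fun z =>
    (hasDerivAt_dsnd hf z.1 z.2).unique (by
      simpa using ((((hline p.2 z.2).pow 2).div_const 2).const_add
        ((z.1 - p.1) ^ 2 / 2)).const_mul t)
  have hx0 : x p = 0 := by simp [x]
  have hy0 : y p = 0 := by simp [y]
  let E' (z : ℝ × ℝ) : ℝ := E z + -(x z * x z)
  let F' (z : ℝ × ℝ) : ℝ := F z + -(x z * y z)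
  let G' (z : ℝ × ℝ) : ℝ := G z + -(y z * y z)
  have hxx := hx.mul hx
  have hxy := hx.mul hy
  have hyy := hy.mul hy
  obtain ⟨a', b', c', ai, ci, ha', hb', hc', hai, hci, hall⟩ := exists_coframe
    (E := E') (F := F') (G := G') (by fun_prop) (by fun_prop) (by fun_prop) (p := p)
    (by simpa [E', hx0] using hp) (by simpa [E', F', G', hx0, hy0] using hD)
  have h' := hall.mono fun z hz => (⟨hz.1, hz.2.1, hz.2.2.2.2⟩ : 0 < a' z ∧ 0 < c' z ∧
    a' z * a' z = E' z ∧ a' z * b' z = F' z ∧ b' z * b' z + c' z * c' z = G' z)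
  have hQ := coframeQuadratic_congr ha hb hc ha' hb' hc' h h'
    (by simp [E', hx0]) (by simp [F', hx0]) (by simp [G', hy0])
    (by rw [dfst_add hE hxx.neg, dfst_neg, dfst_mul hx hx, hx0]; ring)
    (by rw [dfst_add hF hxy.neg, dfst_neg, dfst_mul hx hy, hx0, hy0]; ring)
    (by rw [dfst_add hG hyy.neg, dfst_neg, dfst_mul hy hy, hy0]; ring)
    (by rw [dsnd_add hE hxx.neg, dsnd_neg, dsnd_mul hx hx, hx0]; ring)
    (by rw [dsnd_add hF hxy.neg, dsnd_neg, dsnd_mul hx hy, hx0, hy0]; ring)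
    (by rw [dsnd_add hG hyy.neg, dsnd_neg, dsnd_mul hy hy, hy0]; ring)
  let w₁ (z : ℝ × ℝ) : ℝ := (dfst b' z + -dsnd a' z) * ci z
  let w₂ (z : ℝ × ℝ) : ℝ := (dfst c' z + w₁ z * b' z) * ai z
  have hw₁ : ContDiff ℝ ∞ w₁ :=
    ((contDiff_dfst hb').add (contDiff_dsnd ha').neg).mul hci
  have hw₂ : ContDiff ℝ ∞ w₂ := ((contDiff_dfst hc').add (hw₁.mul hb')).mul hai
  have h₁ : ∀ᶠ z in 𝓝 p, w₁ z * c' z = dfst b' z + -dsnd a' z :=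
    hall.mono fun z hz => by linear_combination (dfst b' z + -dsnd a' z) * hz.2.2.2.1
  have h₂ : ∀ᶠ z in 𝓝 p, w₂ z * a' z = dfst c' z + w₁ z * b' z :=
    hall.mono fun z hz => by linear_combination (dfst c' z + w₁ z * b' z) * hz.2.2.1
  have hcurv := curvature_coframe ha' hb' hc' hw₁ hw₂ h' h₁ h₂
  have hE₂ : dsnd (dsnd E') p = dsnd (dsnd E) p := by
    rw [funext (dsnd_add hE hxx.neg), funext (dsnd_neg fun z => x z * x z),
      dsnd_add (contDiff_dsnd hE) (contDiff_dsnd hxx).neg, dsnd_neg, dsnd_dsnd_mul hx hx, hx0, hx₂]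
    ring
  have hF₂ : dsnd (dfst F') p = dsnd (dfst F) p - t * t := by
    rw [funext (dfst_add hF hxy.neg), funext (dfst_neg fun z => x z * y z),
      dsnd_add (contDiff_dfst hF) (contDiff_dfst hxy).neg, dsnd_neg, dsnd_dfst_mul hx hy, hx0, hy0,
      hx₂, hx₁, hy₂]
    ring
  have hG₂ : dfst (dfst G') p = dfst (dfst G) p := by
    rw [funext (dfst_add hG hyy.neg), funext (dfst_neg fun z => y z * y z),
      dfst_add (contDiff_dfst hG) (contDiff_dfst hyy).neg, dfst_neg, dfst_dfst_mul hy hy, hy0, hy₁]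
    ring
  rw [hE₂, hF₂, hG₂, ← hQ] at hcurv
  have hpos : 0 < (dfst w₂ p - dsnd w₁ p) * (ai p * ci p) := by
    obtain ⟨pa, pc, ea, ec, -⟩ := hall.self_of_nhds
    have hai0 : 0 < ai p := pos_of_mul_pos_right (ea ▸ one_pos) pa.le
    have hci0 : 0 < ci p := pos_of_mul_pos_right (ec ▸ one_pos) pc.le
    have : 0 < a' p * c' p * (dfst w₂ p - dsnd w₁ p) := by
      rw [hcurv]
      linarith
    exact mul_pos (pos_of_mul_pos_right this (by positivity)) (by positivity)
  obtain ⟨k, ki, hk, hki, hke⟩ := exists_smooth_sqrt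
    (f := fun z => (dfst w₂ z - dsnd w₁ z) * (ai z * ci z))
    (((contDiff_dfst hw₂).sub (contDiff_dsnd hw₁)).mul (hai.mul hci)) hpos
  obtain ⟨v, hv, hve⟩ := exists_isometric_of_coframe ha' hb' hc' hai hci hk hki hw₁ hw₂ (p := p) (by
    filter_upwards [hall, h₁, h₂, hke] with z hz h1 h2 h3
    obtain ⟨-, -, ea, ec, -⟩ := hz
    refine ⟨ea, ec, h3.2.1, by linarith, by linarith, ?_⟩
    rw [h3.2.2]
    linear_combination (-(dfst w₂ z - dsnd w₁ z) * ci z * c' z) * ea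
      - (dfst w₂ z - dsnd w₁ z) * ec)
  refine ⟨Fin.snoc v f, fun j => ?_, ?_⟩
  · refine Fin.lastCases ?_ (fun j => ?_) j
    · simpa only [Fin.snoc_last] using hf
    · simpa only [Fin.snoc_castSucc] using hv j
  · filter_upwards [hve, h'] with z ⟨h1, h2, h3⟩ ⟨_, _, h4, h5, h6⟩
    simp only [Fin.sum_univ_castSucc (n := 3), Fin.snoc_castSucc, Fin.snoc_last, h1, h2, h3, hf₁,
      hf₂]
    simp only [E', F', G'] at h4 h5 h6
    exact ⟨by linarith, by linarith, by linarith⟩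

/-! ### Local isometric embeddings -/

theorem HasStrictFDerivAt.exists_injOn {E F : Type} [NormedAddCommGroup E] [NormedSpace ℝ E]
    [FiniteDimensional ℝ E] [NormedAddCommGroup F] [NormedSpace ℝ F] [FiniteDimensional ℝ F]
    {f : E → F} {f' : E →L[ℝ] F} {a : E} (hf : HasStrictFDerivAt f f' a)
    (hf' : Function.Injective f') : ∃ s ∈ 𝓝 a, InjOn f s := by
  have : CompleteSpace E := FiniteDimensional.complete ℝ E
  obtain ⟨l, hl⟩ := f'.toLinearMap.exists_leftInverse_of_injective (LinearMap.ker_eq_bot.2 hf')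
  have hl' : (LinearMap.toContinuousLinearMap l) ∘L f'
      = (ContinuousLinearEquiv.refl ℝ E : E →L[ℝ] E) :=
    ContinuousLinearMap.ext fun v => LinearMap.congr_fun hl v
  have hcomp := (LinearMap.toContinuousLinearMap l).hasStrictFDerivAt.comp a hf
  rw [hl'] at hcomp
  let e := HasStrictFDerivAt.toOpenPartialHomeomorph _ hcomp
  exact ⟨e.source, e.open_source.mem_nhds hcomp.mem_toOpenPartialHomeomorph_source,
    fun x hx y hy hxy => e.injOn hx hy (congrArg l hxy)⟩

theorem eq_zero_of_quadratic_eq_zero {E F G s t : ℝ} (hE : 0 < E) (hD : 0 < E * G - F ^ 2)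
    (h : E * s ^ 2 + 2 * F * s * t + G * t ^ 2 = 0) : s = 0 ∧ t = 0 := by
  have h1 : (E * s + F * t) ^ 2 + (E * G - F ^ 2) * t ^ 2 = 0 := by linear_combination E * h
  have ht : t = 0 := by
    have : (E * G - F ^ 2) * t ^ 2 = 0 :=
      le_antisymm (by nlinarith [sq_nonneg (E * s + F * t)]) (by positivity)
    simpa [hD.ne'] using this
  subst ht
  have : E * s ^ 2 = 0 := by linarith
  exact ⟨by simpa [hE.ne'] using this, rfl⟩

/-- **Poznyak (1973).** Every smooth Riemannian metric on an open subset of `ℝ²` admits,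
near any point, a smooth local isometric embedding into `ℝ⁴`. -/
theorem poznyak (Ω : Set E2) (hΩ : IsOpen Ω) (p : E2) (hp : p ∈ Ω)
    (g : E2 → Matrix (Fin 2) (Fin 2) ℝ)
    (hg_smooth : ContDiffOn ℝ (⊤ : ℕ∞) g Ω)
    (hg_met : ∀ x ∈ Ω, (g x).IsSymm ∧ (g x).PosDef) :
    ∃ U : Set E2, IsOpen U ∧ p ∈ U ∧ U ⊆ Ω ∧
      ∃ u : E2 → EuclideanSpace ℝ (Fin 4),
        ContDiffOn ℝ (⊤ : ℕ∞) u U ∧ Set.InjOn u U ∧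
        ∀ x ∈ U, (Jac u x)ᵀ * Jac u x = g x := by
  let L : E2 →L[ℝ] ℝ × ℝ :=
    (EuclideanSpace.proj (0 : Fin 2)).prod (EuclideanSpace.proj (1 : Fin 2))
  let M : ℝ × ℝ →L[ℝ] E2 :=
    (ContinuousLinearMap.fst ℝ ℝ ℝ).smulRight (EuclideanSpace.single 0 1)
      + (ContinuousLinearMap.snd ℝ ℝ ℝ).smulRight (EuclideanSpace.single 1 1)
  have hML : ∀ x, M (L x) = x := fun x => by
    ext i
    fin_cases i <;> simp [M, L]
  have hMt : Tendsto M (𝓝 (L p)) (𝓝 p) := by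
    have := M.continuous.tendsto (L p)
    rwa [hML] at this
  have hentry : ∀ i j, ∃ f : ℝ × ℝ → ℝ, ContDiff ℝ ∞ f ∧
      f =ᶠ[𝓝 (L p)] fun z => g (M z) i j := fun i j => by
    refine exists_contDiff_eventuallyEq ?_
    filter_upwards [hMt.eventually (hΩ.mem_nhds hp)] with z hz
    have h : ContDiffAt ℝ ∞ (fun z => g (M z)) z :=
      (hg_smooth.contDiffAt (hΩ.mem_nhds hz)).comp z M.contDiff.contDiffAt
    exact contDiffAt_pi.1 (contDiffAt_pi.1 h i) j
  choose f hf hfe using hentry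
  have hval : ∀ i j, f i j (L p) = g p i j := fun i j => by
    have h : f i j (L p) = g (M (L p)) i j := (hfe i j).self_of_nhds
    rwa [hML] at h
  have hpos : 0 < f 0 0 (L p) := by
    rw [hval]
    exact (hg_met p hp).2.diag_pos
  have hdet : 0 < f 0 0 (L p) * f 1 1 (L p) - f 0 1 (L p) ^ 2 := by
    have h := (hg_met p hp).2.det_pos
    rw [Matrix.det_fin_two, (hg_met p hp).1.apply 0 1] at h
    rw [hval, hval, hval]
    linarith
  obtain ⟨v, hv, hve⟩ := exists_isometric_coords (hf 0 0) (hf 0 1) (hf 1 1) hpos hdet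
  let u (x : E2) : EuclideanSpace ℝ (Fin 4) := WithLp.toLp 2 fun j => v j (L x)
  have hu : ContDiff ℝ ∞ u := contDiff_euclidean.2 fun j => (hv j).comp L.contDiff
  have hfd : ∀ x w i, fderiv ℝ u x w i = dfst (v i) (L x) * w 0 + dsnd (v i) (L x) * w 1 := by
    intro x w i
    have h1 : HasFDerivAt (fun x => u x i)
        ((EuclideanSpace.proj i : EuclideanSpace ℝ (Fin 4) →L[ℝ] ℝ) ∘L fderiv ℝ u x) x :=
      (EuclideanSpace.proj i : EuclideanSpace ℝ (Fin 4) →L[ℝ] ℝ).hasFDerivAt.comp x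
        (hu.differentiable (by simp) x).hasFDerivAt
    have h2 : HasFDerivAt (fun x => u x i) (fderiv ℝ (v i) (L x) ∘L L) x :=
      ((hv i).differentiable (by simp) (L x)).hasFDerivAt.comp x L.hasFDerivAt
    have h3 := congrArg (fun A : E2 →L[ℝ] ℝ => A w) (h1.unique h2)
    exact h3.trans (fderiv_apply_eq (L x) (L w))
  have hLt : Tendsto L (𝓝 p) (𝓝 (L p)) := L.continuous.tendsto p
  have hgram : ∀ᶠ x in 𝓝 p, x ∈ Ω ∧ (Jac u x)ᵀ * Jac u x = g x := by
    filter_upwards [hΩ.mem_nhds hp, hLt.eventually hve, hLt.eventually (hfe 0 0),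
      hLt.eventually (hfe 0 1), hLt.eventually (hfe 1 1)] with x hx h h00 h01 h11
    rw [hML] at h00 h01 h11
    rw [h00, h01, h11] at h
    obtain ⟨h1, h2, h3⟩ := h
    refine ⟨hx, ?_⟩
    ext i j
    rw [Matrix.mul_apply]
    simp only [Matrix.transpose_apply, Jac, Matrix.of_apply, hfd]
    fin_cases i <;> fin_cases j
    · simpa [sq] using h1
    · simpa using h2
    · rw [← (hg_met x hx).1.apply] at h2
      simpa [mul_comm] using h2
    · simpa [sq] using h3
  obtain ⟨s, hs, hinj⟩ := (hu.contDiffAt.hasStrictFDerivAt (x := p) (by simp)).exists_injOn (by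
    rw [injective_iff_map_eq_zero]
    intro w hw
    obtain ⟨h1, h2, h3⟩ := hve.self_of_nhds
    have hj : ∀ j, dfst (v j) (L p) * w 0 + dsnd (v j) (L p) * w 1 = 0 := fun j => by
      rw [← hfd, hw]
      rfl
    have hq := eq_zero_of_quadratic_eq_zero (s := w 0) (t := w 1) hpos hdet (by
      rw [← h1, ← h2, ← h3]
      simp only [Fin.sum_univ_four]
      linear_combination (dfst (v 0) (L p) * w 0 + dsnd (v 0) (L p) * w 1) * hj 0
        + (dfst (v 1) (L p) * w 0 + dsnd (v 1) (L p) * w 1) * hj 1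
        + (dfst (v 2) (L p) * w 0 + dsnd (v 2) (L p) * w 1) * hj 2
        + (dfst (v 3) (L p) * w 0 + dsnd (v 3) (L p) * w 1) * hj 3)
    ext i
    fin_cases i
    · exact hq.1
    · exact hq.2)
  obtain ⟨U, hU, hUo, hpU⟩ := mem_nhds_iff.1 (inter_mem hgram hs)
  exact ⟨U, hUo, hpU, fun x hx => (hU hx).1.1, u, hu.contDiffOn,
    hinj.mono fun x hx => (hU hx).2, fun x hx => (hU hx).1.2⟩
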